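/- arXiv:1307.4456 — 3 statements merged into one kernel-verified Lean document; each statement's English description precedes it below -/
import Mathlib

section
/- By the Nash-Williams formula, a graph G has arboricity at most b if and only if every subgraph H of G with at least 2 vertices satisfies |E(H)| ≤ b(|V(H)| − 1). -/
/-- `G` has arboricity at most `b`: the edge set of `G` is the union of the edge
sets of `b` forests. -/
def ArboricityLE {V : Type*} (G : SimpleGraph V) (b : ℕ) : Prop :=
  ∃ F : Fin b → SimpleGraph V, (∀ i, (F i).IsAcyclic) ∧ (⨆ i, F i) = G


structure NWRank {E : Type*} [DecidableEq E] (r : Finset E → ℕ) : Prop where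
  empty : r ∅ = 0
  mono : ∀ A B, A ⊆ B → r A ≤ r B
  submod : ∀ A B, r (A ∪ B) + r (A ∩ B) ≤ r A + r B
  single : ∀ e, r {e} ≤ 1

theorem NWRank.contract {E : Type*} [DecidableEq E] {r : Finset E → ℕ} (h : NWRank r) (e : E)
    (he : r {e} = 1) : NWRank (fun A => r (insert e A) - 1) where
  empty := by simp [he]
  mono A B hAB := Nat.sub_le_sub_right (h.mono _ _ (Finset.insert_subset_insert _ hAB)) 1
  submod A B := by
    have h1 := h.submod (insert e A) (insert e B)
    have pos : ∀ C : Finset E, 1 ≤ r (insert e C) := fun C => by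
      rw [← he]; exact h.mono _ _ (by simp)
    rw [← Finset.insert_union_distrib, ← Finset.insert_inter_distrib] at h1
    have := pos A
    have := pos B
    have := pos (A ∪ B)
    have := pos (A ∩ B)
    omega
  single f := by
    have h1 := h.submod {e} {f}
    have := h.single f
    have : ({e} : Finset E) ∪ {f} = insert e {f} := rfl
    rw [this] at h1
    omega

/-- Tight sets are closed under union. -/
theorem nw_tight_union {E ι κ : Type*} [DecidableEq E] [Fintype ι]
    (r : ι → Finset E → ℕ) (hr : ∀ i, NWRank (r i)) (X : Finset E)
    (hX : ∀ Y ⊆ X, Y.card ≤ ∑ i, r i Y) (s : Finset κ) (Y : κ → Finset E)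
    (hY : ∀ k ∈ s, Y k ⊆ X) (ht : ∀ k ∈ s, ∑ i, r i (Y k) ≤ (Y k).card) :
    ∑ i, r i (s.biUnion Y) ≤ (s.biUnion Y).card := by
  classical
  induction s using Finset.induction_on with
  | empty => simp [(hr _).empty]
  | insert a s ha ih =>
    have ih := ih (fun k hk => hY k (by simp [hk])) (fun k hk => ht k (by simp [hk]))
    have h1 := ht a (by simp)
    rw [Finset.biUnion_insert]
    have h2 : ∑ i, r i (Y a ∪ s.biUnion Y) + ∑ i, r i (Y a ∩ s.biUnion Y)
        ≤ ∑ i, r i (Y a) + ∑ i, r i (s.biUnion Y) := by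
      rw [← Finset.sum_add_distrib, ← Finset.sum_add_distrib]
      exact Finset.sum_le_sum fun i _ => (hr i).submod _ _
    have h3 := hX (Y a ∩ s.biUnion Y) (Finset.inter_subset_left.trans (hY a (by simp)))
    have h4 := Finset.card_union_add_card_inter (Y a) (s.biUnion Y)
    omega

/-- Matroid partition theorem, in terms of rank functions. -/
theorem nw_partition {E ι : Type*} [DecidableEq E] [Fintype ι] [DecidableEq ι] (n : ℕ) :
    ∀ (X : Finset E) (_ : X.card = n) (r : ι → Finset E → ℕ) (_ : ∀ i, NWRank (r i))
    (_ : ∀ Y ⊆ X, Y.card ≤ ∑ i, r i Y),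
    ∃ I : ι → Finset E, (∀ i, I i ⊆ X) ∧ (∀ e ∈ X, ∃ i, e ∈ I i) ∧
      ∀ i, r i (I i) = (I i).card := by
  induction n with
  | zero =>
    intro X hX r hr _
    rw [Finset.card_eq_zero] at hX
    subst hX
    exact ⟨fun _ => ∅, by simp, by simp, fun i => by simp [(hr i).empty]⟩
  | succ n ih =>
    intro X hXn r hr hX
    obtain ⟨e, he⟩ : X.Nonempty := by rw [← Finset.card_pos]; omega
    by_cases hgood : ∃ i, r i {e} = 1 ∧ ∀ Y ⊆ X.erase e,
        Y.card + r i Y + 1 ≤ ∑ j, r j Y + r i (insert e Y)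
    · obtain ⟨i, hi, hY⟩ := hgood
      obtain ⟨I, hI1, hI2, hI3⟩ := ih (X.erase e) (by rw [Finset.card_erase_of_mem he]; omega)
        (Function.update r i (fun A => r i (insert e A) - 1)) (by
          intro j
          by_cases hj : j = i
          · subst hj; simpa using (hr j).contract e hi
          · simpa [hj] using hr j) (by
          intro Y hYX
          have h1 := hY Y hYX
          have h2 : ∑ j, r j Y = r i Y + ∑ j ∈ Finset.univ.erase i, r j Y :=
            (Finset.add_sum_erase _ _ (Finset.mem_univ i)).symm
          rw [← Finset.add_sum_erase _ _ (Finset.mem_univ i)]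
          have h3 : ∑ j ∈ Finset.univ.erase i,
              Function.update r i (fun A => r i (insert e A) - 1) j Y
              = ∑ j ∈ Finset.univ.erase i, r j Y :=
            Finset.sum_congr rfl fun j hj => by simp [Finset.ne_of_mem_erase hj]
          rw [h3]
          simp only [Function.update_self]
          omega)
      refine ⟨Function.update I i (insert e (I i)), ?_, ?_, ?_⟩
      · intro j
        by_cases hj : j = i
        · subst hj
          simp only [Function.update_self]
          exact Finset.insert_subset he ((hI1 j).trans (Finset.erase_subset _ _))
        · simpa [hj] using (hI1 j).trans (Finset.erase_subset _ _)
      · intro f hf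
        by_cases hfe : f = e
        · exact ⟨i, by simp [hfe]⟩
        · obtain ⟨j, hj⟩ := hI2 f (by simp [hfe, hf])
          refine ⟨j, ?_⟩
          by_cases hji : j = i
          · subst hji; simp [hj]
          · simpa [hji] using hj
      · intro j
        by_cases hj : j = i
        · subst hj
          have h1 := hI3 j
          have h2 : e ∉ I j := fun h => by simpa using hI1 j h
          have h3 : r j {e} ≤ r j (insert e (I j)) := (hr j).mono _ _ (by simp)
          simp only [Function.update_self] at h1 ⊢
          rw [Finset.card_insert_of_notMem h2]
          omega
        · have := hI3 j
          simpa [hj] using this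
    · exfalso
      have key : ∀ i, ∃ Y ⊆ X.erase e, ∑ j, r j Y ≤ Y.card ∧ r i (insert e Y) ≤ r i Y := by
        intro i
        by_cases hi : r i {e} = 1
        · push Not at hgood
          obtain ⟨Y, hY, hlt⟩ := hgood i hi
          have h1 := hX Y (hY.trans (Finset.erase_subset _ _))
          have h2 := (hr i).mono Y (insert e Y) (Finset.subset_insert _ _)
          exact ⟨Y, hY, by omega, by omega⟩
        · refine ⟨∅, by simp, by simp [(hr _).empty], ?_⟩
          have := (hr i).single e
          simp only [insert_empty_eq]
          omega
      choose Y hYX hYt hYe using key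
      have ht := nw_tight_union r hr X hX Finset.univ Y
        (fun k _ => (hYX k).trans (Finset.erase_subset _ _)) (fun k _ => hYt k)
      set Z := Finset.univ.biUnion Y with hZ
      have hZX : Z ⊆ X.erase e := Finset.biUnion_subset.2 fun k _ => hYX k
      have heZ : e ∉ Z := fun h => by simpa using hZX h
      have h1 := hX (insert e Z)
        (Finset.insert_subset he (hZX.trans (Finset.erase_subset _ _)))
      rw [Finset.card_insert_of_notMem heZ] at h1
      have h2 : ∑ i, r i (insert e Z) ≤ ∑ i, r i Z := by
        refine Finset.sum_le_sum fun i _ => ?_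
        have hsub : Y i ⊆ Z := Finset.subset_biUnion_of_mem Y (Finset.mem_univ i)
        have h3 := (hr i).submod (insert e (Y i)) Z
        have h4 : insert e (Y i) ∪ Z = insert e Z := by
          rw [Finset.insert_union, Finset.union_eq_right.2 hsub]
        have h5 := (hr i).mono (Y i) (insert e (Y i) ∩ Z)
          (Finset.subset_inter (Finset.subset_insert _ _) hsub)
        have h6 := hYe i
        rw [h4] at h3
        omega
      omega

theorem nw_add_self {V : Type*} (f : V → ZMod 2) : f + f = 0 :=
  funext fun _ => CharTwo.add_self_eq_zero _

open Classical in
/-- Vector of an edge over `ZMod 2`. -/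
noncomputable def nwVec {V : Type*} : Sym2 V → (V → ZMod 2) :=
  Sym2.lift ⟨fun x y => Pi.single x 1 + Pi.single y 1, fun _ _ => add_comm _ _⟩

/-- Span of the vectors of a set of edges. -/
def nwSpan {V : Type*} (A : Set (Sym2 V)) : Submodule (ZMod 2) (V → ZMod 2) :=
  Submodule.span (ZMod 2) (nwVec '' A)

/-- Graphic matroid rank function. -/
noncomputable def nwRk {V : Type*} (A : Finset (Sym2 V)) : ℕ :=
  Module.finrank (ZMod 2) (nwSpan (A : Set (Sym2 V)))

theorem nwRk_le_card {V : Type*} [Fintype V] [DecidableEq V] (A : Finset (Sym2 V)) :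
    nwRk A ≤ A.card := by
  unfold nwRk nwSpan
  have h := finrank_span_finset_le_card (R := ZMod 2) (A.image (nwVec (V := V)))
  rw [Finset.coe_image] at h
  exact h.trans Finset.card_image_le

theorem nwRk_isRank {V : Type*} [Fintype V] [DecidableEq V] :
    NWRank (nwRk : Finset (Sym2 V) → ℕ) where
  empty := Nat.le_zero.1 (by simpa using nwRk_le_card (∅ : Finset (Sym2 V)))
  mono A B hAB := Submodule.finrank_mono
    (Submodule.span_mono (Set.image_mono (by exact_mod_cast hAB)))
  submod A B := by
    unfold nwRk
    rw [← Submodule.finrank_sup_add_finrank_inf_eq (nwSpan (A : Set (Sym2 V))) (nwSpan (B : Set (Sym2 V)))]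
    have h1 : nwSpan ((A ∪ B : Finset (Sym2 V)) : Set (Sym2 V)) = nwSpan (A : Set (Sym2 V)) ⊔ nwSpan (B : Set (Sym2 V)) := by
      simp [nwSpan, Set.image_union, Submodule.span_union]
    have h2 : nwSpan ((A ∩ B : Finset (Sym2 V)) : Set (Sym2 V)) ≤ nwSpan (A : Set (Sym2 V)) ⊓ nwSpan (B : Set (Sym2 V)) :=
      le_inf (Submodule.span_mono (Set.image_mono (by simp)))
        (Submodule.span_mono (Set.image_mono (by simp)))
    rw [h1]
    exact Nat.add_le_add_left (Submodule.finrank_mono h2) _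
  single e := by simpa using nwRk_le_card {e}

/-- Reachable vertices have difference in the span. -/
theorem nw_reach {V : Type*} (A : Set (Sym2 V)) (H : SimpleGraph V) (hH : H.edgeSet ⊆ A)
    {x y : V} (h : H.Reachable x y) : nwVec s(x, y) ∈ nwSpan A := by
  classical
  obtain ⟨p⟩ := h
  induction p with
  | nil => 
    rename_i u
    have : nwVec s(u, u) = (0 : V → ZMod 2) := by
      simp only [nwVec, Sym2.lift_mk]
      exact nw_add_self _
    rw [this]; exact Submodule.zero_mem _
  | cons hadj p ih =>
    rename_i u v w
    have : nwVec s(u, w) = nwVec s(u, v) + nwVec s(v, w) := by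
      simp only [nwVec, Sym2.lift_mk]
      rw [add_assoc, ← add_assoc _ _ (Pi.single w 1 : V → ZMod 2), nw_add_self, zero_add]
    rw [this]
    exact Submodule.add_mem _ (Submodule.subset_span ⟨_, hH hadj, rfl⟩) ih

theorem nw_acyclic {V : Type*} [Fintype V] [DecidableEq V] (A : Finset (Sym2 V))
    (hA : nwRk A = A.card) :
    (SimpleGraph.fromEdgeSet (A : Set (Sym2 V))).IsAcyclic := by
  rw [SimpleGraph.isAcyclic_iff_forall_isBridge]
  intro e he
  induction e with | _ x y
  have heA : s(x, y) ∈ A := by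
    have := (SimpleGraph.edgeSet_fromEdgeSet (A : Set (Sym2 V)) ▸ he).1
    exact_mod_cast this
  rw [SimpleGraph.isBridge_iff]
  intro hr
  have hmem := nw_reach ((A.erase s(x, y) : Finset (Sym2 V)) : Set (Sym2 V)) _ (by
    intro f hf
    simp only [SimpleGraph.edgeSet_deleteEdges, SimpleGraph.edgeSet_fromEdgeSet, Set.mem_sdiff] at hf
    simp only [Finset.coe_erase, Set.mem_sdiff]
    exact ⟨hf.1.1, hf.2⟩) hr
  have h1 : nwSpan (A : Set (Sym2 V)) ≤ nwSpan ((A.erase s(x, y) : Finset (Sym2 V)) : Set (Sym2 V)) := by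
    refine Submodule.span_le.2 ?_
    rintro _ ⟨f, hf, rfl⟩
    by_cases hfe : f = s(x, y)
    · subst hfe; exact hmem
    · exact Submodule.subset_span ⟨f, by simpa [hfe] using hf, rfl⟩
  have h2 : nwRk A ≤ nwRk (A.erase s(x, y)) := Submodule.finrank_mono h1
  have h3 := nwRk_le_card (A.erase s(x, y))
  have h4 := Finset.card_erase_lt_of_mem heA
  omega

theorem nw_rank_lower {V : Type*} [Fintype V] [DecidableEq V] (A : Finset (Sym2 V))
    (H : SimpleGraph V) (hH : H = SimpleGraph.fromEdgeSet (A : Set (Sym2 V)))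
    [Fintype H.ConnectedComponent] :
    Fintype.card V ≤ nwRk A + Fintype.card H.ConnectedComponent := by
  let b : H.ConnectedComponent → (V → ZMod 2) := fun c => Pi.single c.out 1
  have htop : nwSpan (A : Set (Sym2 V)) ⊔ Submodule.span (ZMod 2) (Set.range b) = ⊤ := by
    rw [eq_top_iff, ← (Pi.basisFun (ZMod 2) V).span_eq, Submodule.span_le]
    rintro _ ⟨v, rfl⟩
    rw [Pi.basisFun_apply]
    have hre : H.Reachable v (H.connectedComponentMk v).out :=
      SimpleGraph.ConnectedComponent.exact (Quot.out_eq (H.connectedComponentMk v)).symm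
    have h1 := nw_reach (A : Set (Sym2 V)) H (by
      rw [hH, SimpleGraph.edgeSet_fromEdgeSet]; exact Set.sdiff_subset) hre
    have h2 : b (H.connectedComponentMk v) ∈ Submodule.span (ZMod 2) (Set.range b) :=
      Submodule.subset_span ⟨_, rfl⟩
    have h3 := Submodule.add_mem_sup h1 h2
    have h4 : nwVec s(v, (H.connectedComponentMk v).out) + b (H.connectedComponentMk v)
        = Pi.single v 1 := by
      have := nw_add_self (b (H.connectedComponentMk v))
      have h5 : nwVec s(v, (H.connectedComponentMk v).out)
        = Pi.single v 1 + b (H.connectedComponentMk v) := by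
        simp only [nwVec, Sym2.lift_mk, b]
        congr!
      rw [h5, add_assoc, this, add_zero]
    rw [h4] at h3
    exact h3
  have h1 := Submodule.finrank_add_le_finrank_add_finrank (nwSpan (A : Set (Sym2 V)))
    (Submodule.span (ZMod 2) (Set.range b))
  rw [htop, finrank_top, Module.finrank_fintype_fun_eq_card] at h1
  have h2 : Module.finrank (ZMod 2) (Submodule.span (ZMod 2) (Set.range b)) ≤ _ :=
    finrank_range_le_card (R := ZMod 2) b
  unfold nwRk
  omega

theorem nw_count {V : Type*} [Fintype V] [DecidableEq V] (G : SimpleGraph V) (b : ℕ)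
    (hG : ∀ H : G.Subgraph, 2 ≤ H.verts.ncard → H.edgeSet.ncard ≤ b * (H.verts.ncard - 1))
    (A : Finset (Sym2 V)) (hA : (A : Set (Sym2 V)) ⊆ G.edgeSet) :
    A.card ≤ b * nwRk A := by
  classical
  obtain ⟨K, hK⟩ : ∃ K, K = SimpleGraph.fromEdgeSet (A : Set (Sym2 V)) := ⟨_, rfl⟩
  have hlow := nw_rank_lower A K hK
  have hKG : K ≤ G := by
    intro x y hxy
    exact hA ((SimpleGraph.fromEdgeSet_adj _).1 (hK ▸ hxy)).1
  let S : K.ConnectedComponent → G.Subgraph := fun c =>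
    { verts := c.supp
      Adj := fun x y => K.Adj x y ∧ x ∈ c.supp
      adj_sub := fun h => hKG h.1
      edge_vert := fun h => h.2
      symm := ⟨fun x y h => ⟨h.1.symm, c.mem_supp_of_adj_mem_supp h.2 h.1⟩⟩ }
  have hS : ∀ c, (S c).edgeSet.ncard + b ≤ b * c.supp.ncard := by
    intro c
    have hpos : 0 < c.supp.ncard := (Set.ncard_pos).2 c.nonempty_supp
    by_cases h2 : 2 ≤ c.supp.ncard
    · have := hG (S c) h2
      change _ ≤ b * (c.supp.ncard - 1) at this
      obtain ⟨m, hm⟩ : ∃ m, c.supp.ncard = m + 1 := ⟨_, (Nat.sub_add_cancel hpos).symm⟩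
      rw [hm] at this ⊢
      rw [Nat.mul_add]
      simp at this
      omega
    · have h1 : c.supp.ncard = 1 := by omega
      have h3 : (S c).edgeSet = ∅ := by
        rw [Set.eq_empty_iff_forall_notMem]
        intro e he
        induction e with | _ x y
        have he' : K.Adj x y ∧ x ∈ c.supp := he
        have hy := c.mem_supp_of_adj_mem_supp he'.2 he'.1
        obtain ⟨a, ha⟩ := Set.ncard_eq_one.1 h1
        rw [ha] at hy
        have hx := he'.2
        rw [ha] at hx
        exact he'.1.ne (hx.trans hy.symm)
      rw [h3, h1]; simp
  have hcov : (A : Set (Sym2 V)) ⊆ ⋃ c, (S c).edgeSet := by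
    intro e he
    induction e with | _ x y
    refine Set.mem_iUnion.2 ⟨K.connectedComponentMk x, ?_⟩
    change K.Adj x y ∧ x ∈ (K.connectedComponentMk x).supp
    refine ⟨hK ▸ (SimpleGraph.fromEdgeSet_adj _).2 ⟨he, ?_⟩, rfl⟩
    exact (show G.Adj x y from hA he).ne
  have hcard : A.card ≤ ∑ c, (S c).edgeSet.ncard := by
    have h1 : A ⊆ Finset.univ.biUnion fun c => (S c).edgeSet.toFinset := by
      intro e he
      simpa using hcov he
    refine (Finset.card_le_card h1).trans (Finset.card_biUnion_le.trans ?_)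
    exact Finset.sum_le_sum fun c _ => (Set.ncard_eq_toFinset_card' _).ge
  have hV : ∑ c : K.ConnectedComponent, c.supp.ncard = Fintype.card V := by
    rw [← Finset.card_univ, Finset.card_eq_sum_card_fiberwise (f := K.connectedComponentMk)
      (t := Finset.univ) (by simp)]
    refine Finset.sum_congr rfl fun c _ => ?_
    rw [Set.ncard_eq_toFinset_card']
    congr 1
    ext v
    simp
  have hsum := Finset.sum_le_sum fun (c : K.ConnectedComponent) (_ : c ∈ Finset.univ) => hS c
  rw [Finset.sum_add_distrib, ← Finset.mul_sum, hV] at hsum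
  simp only [Finset.sum_const, Finset.card_univ, smul_eq_mul] at hsum
  have := Nat.mul_le_mul_left b hlow
  rw [Nat.mul_add, Nat.mul_comm b (Fintype.card K.ConnectedComponent)] at this
  omega

theorem nw_forest_card {W : Type*} [Fintype W] [Nonempty W] (F : SimpleGraph W)
    (hF : F.IsAcyclic) : F.edgeSet.ncard ≤ Fintype.card W - 1 := by
  classical
  obtain ⟨T, hFT, -, hT⟩ := (SimpleGraph.connected_top (V := W)).exists_isTree_le_of_le_of_isAcyclic
    le_top hF
  have h1 := hT.card_edgeFinset
  have h2 : F.edgeSet.ncard ≤ T.edgeSet.ncard :=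
    Set.ncard_le_ncard (SimpleGraph.edgeSet_mono hFT) (Set.toFinite _)
  rw [Set.ncard_eq_toFinset_card' T.edgeSet] at h2
  rw [SimpleGraph.edgeFinset] at h1
  omega

/-- **Nash-Williams' formula.** A graph `G` has arboricity at most `b` if and
only if every subgraph `H` of `G` with at least `2` vertices satisfies
`|E(H)| ≤ b(|V(H)| − 1)`. -/
theorem nash_williams {V : Type*} [Fintype V] (G : SimpleGraph V) (b : ℕ) :
    ArboricityLE G b ↔
      ∀ H : G.Subgraph, 2 ≤ H.verts.ncard → H.edgeSet.ncard ≤ b * (H.verts.ncard - 1) := by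
  classical
  constructor
  · rintro ⟨F, hF, hFG⟩ H hH
    have hne : Nonempty H.verts := by
      have := (Set.ncard_pos (Set.toFinite H.verts)).1 (by omega)
      exact this.to_subtype
    let D : Fin b → Set (Sym2 V) := fun i =>
      Sym2.map (Subtype.val : H.verts → V) '' ((F i).induce H.verts).edgeSet
    have hD : ∀ i, (D i).ncard ≤ H.verts.ncard - 1 := by
      intro i
      refine (Set.ncard_image_le (Set.toFinite _)).trans ?_
      have := nw_forest_card _ ((hF i).induce H.verts)
      rwa [← Nat.card_eq_fintype_card, Nat.card_coe_set_eq] at this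
    have hcov : H.edgeSet ⊆ ⋃ i, D i := by
      intro e he
      induction e with | _ x y
      have hadj : H.Adj x y := he
      have hG := H.adj_sub hadj
      rw [← hFG, SimpleGraph.iSup_adj] at hG
      obtain ⟨i, hi⟩ := hG
      exact Set.mem_iUnion.2 ⟨i, s(⟨x, H.edge_vert hadj⟩, ⟨y, H.edge_vert hadj.symm⟩), hi, rfl⟩
    have h1 : H.edgeSet.toFinset ⊆ Finset.univ.biUnion fun i => (D i).toFinset := by
      intro e he
      simpa using hcov (by simpa using he)
    rw [Set.ncard_eq_toFinset_card']
    refine (Finset.card_le_card h1).trans ?_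
    refine (Finset.card_biUnion_le_card_mul _ _ (H.verts.ncard - 1) ?_).trans (by simp)
    intro i _
    rw [← Set.ncard_eq_toFinset_card']
    exact hD i
  · intro h
    obtain ⟨I, hI1, hI2, hI3⟩ := nw_partition (ι := Fin b) _ G.edgeFinset rfl (fun _ => nwRk)
      (fun _ => nwRk_isRank) (by
        intro Y hY
        simp only [Finset.sum_const, Finset.card_univ, Fintype.card_fin, smul_eq_mul]
        exact nw_count G b h Y (fun e he => by simpa using hY he))
    refine ⟨fun i => SimpleGraph.fromEdgeSet (I i : Set (Sym2 V)),
      fun i => nw_acyclic _ (hI3 i), ?_⟩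
    ext x y
    rw [SimpleGraph.iSup_adj]
    constructor
    · rintro ⟨i, hi⟩
      simpa using hI1 i (((SimpleGraph.fromEdgeSet_adj _).1 hi).1)
    · intro hxy
      obtain ⟨i, hi⟩ := hI2 s(x, y) (by simpa using hxy)
      exact ⟨i, (SimpleGraph.fromEdgeSet_adj _).2 ⟨hi, hxy.ne⟩⟩
end

section
/- For all integers d ≥ 4, k ≥ 3, and Δ ≥ 2d, there exists a graph with average degree at most d, maximum degree at most Δ, diameter at most k, and at least (d/8)·⌊Δ/4⌋^{k−1} vertices. -/
namespace AvgDeg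

/-- core vertices -/
abbrev Core (t Q : ℕ) := Fin t × Fin Q × Fin t
/-- leaf vertices -/
abbrev Leaf (t Q l : ℕ) := Fin Q × Fin t × Fin l

/-- numbering of the core -/
def num {t Q : ℕ} (x : Core t Q) : ℕ := (x.1.val * Q + x.2.1.val) * t + x.2.2.val

lemma num_lt {t Q : ℕ} (x : Core t Q) : num x < t * Q * t := by
  obtain ⟨c, a, b⟩ := x
  have h1 : c.val * Q + a.val + 1 ≤ t * Q := by
    have := Nat.mul_le_mul_right Q (Nat.succ_le_of_lt c.2)
    have := a.2
    rw [Nat.succ_mul] at *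
    omega
  have h2 := Nat.mul_le_mul_right t h1
  have := b.2
  rw [Nat.succ_mul] at h2
  simp only [num]
  omega

lemma num_surj {t Q : ℕ} (n : ℕ) (h : n < t * Q * t) : ∃ x : Core t Q, num x = n := by
  have ht : 0 < t := by
    rcases Nat.eq_zero_or_pos t with h0 | h0
    · subst h0; simp at h
    · exact h0
  have hQ : 0 < Q := by
    rcases Nat.eq_zero_or_pos Q with h0 | h0
    · subst h0; simp at h
    · exact h0
  have h1 : n / t < t * Q := by
    rw [Nat.div_lt_iff_lt_mul ht]; exact h
  have h2 : n / t / Q < t := by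
    rw [Nat.div_lt_iff_lt_mul hQ]; exact h1
  refine ⟨(⟨n / t / Q, h2⟩, ⟨n / t % Q, Nat.mod_lt _ hQ⟩, ⟨n % t, Nat.mod_lt _ ht⟩), ?_⟩
  simp only [num]
  rw [Nat.div_add_mod', Nat.div_add_mod']

lemma num_mod {t Q : ℕ} (x : Core t Q) :
    num x % (Q * t) = x.2.1.val * t + x.2.2.val := by
  obtain ⟨c, a, b⟩ := x
  simp only [num]
  have : (c.val * Q + a.val) * t + b.val = (a.val * t + b.val) + (Q * t) * c.val := by ring
  rw [this, Nat.add_mul_mod_self_left, Nat.mod_eq_of_lt]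
  have := Nat.mul_le_mul_right t (Nat.succ_le_of_lt a.2)
  rw [Nat.succ_mul] at this
  omega

lemma pair_inj {t a b a' b' : ℕ} (hb : b < t) (hb' : b' < t)
    (h : a * t + b = a' * t + b') : a = a' ∧ b = b' := by
  have h1 := congrArg (· % t) h
  simp only [Nat.mul_add_mod_self_right, Nat.mod_eq_of_lt hb, Nat.mod_eq_of_lt hb'] at h1
  subst h1
  have : a * t = a' * t := by omega
  exact ⟨Nat.eq_of_mul_eq_mul_right (by omega) this, rfl⟩

lemma num_inj {t Q : ℕ} {x y : Core t Q} (h : num x = num y) : x = y := by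
  obtain ⟨c, a, b⟩ := x
  obtain ⟨c', a', b'⟩ := y
  simp only [num] at h
  obtain ⟨h1, h2⟩ := pair_inj b.2 b'.2 h
  obtain ⟨h3, h4⟩ := pair_inj a.2 a'.2 h1
  simp [Fin.ext_iff, *]

/-- directed core arcs -/
def arc {t Q : ℕ} (q P : ℕ) (x y : Core t Q) : Prop := num y / q = num x % P

/-- core to leaf incidence -/
def inc {t Q l : ℕ} (x : Core t Q) (v : Leaf t Q l) : Prop :=
  x.2.1 = v.1 ∧ (x.1 = v.2.1 ∨ x.2.2 = v.2.1)

/-- the adjacency before symmetrization -/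
def rel {t Q l : ℕ} (q P : ℕ) : Core t Q ⊕ Leaf t Q l → Core t Q ⊕ Leaf t Q l → Prop
  | Sum.inl x, Sum.inl y => arc q P x y
  | Sum.inl x, Sum.inr v => inc x v
  | _, _ => False

/-- the graph -/
def gr (t Q l q P : ℕ) : SimpleGraph (Core t Q ⊕ Leaf t Q l) := SimpleGraph.fromRel (rel q P)

/-- walk of bounded length -/
def near {V : Type*} (G : SimpleGraph V) (m : ℕ) (u v : V) : Prop :=
  ∃ p : G.Walk u v, p.length ≤ m

lemma near.symm {V : Type*} {G : SimpleGraph V} {m : ℕ} {u v : V} (h : near G m u v) :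
    near G m v u := by
  obtain ⟨p, hp⟩ := h
  exact ⟨p.reverse, by simpa using hp⟩

lemma near.trans {V : Type*} {G : SimpleGraph V} {m n : ℕ} {u v w : V} (h : near G m u v)
    (h' : near G n v w) : near G (m + n) u w := by
  obtain ⟨p, hp⟩ := h
  obtain ⟨r, hr⟩ := h'
  exact ⟨p.append r, by rw [SimpleGraph.Walk.length_append]; omega⟩

lemma near_refl {V : Type*} (G : SimpleGraph V) (m : ℕ) (u : V) : near G m u u :=
  ⟨SimpleGraph.Walk.nil, by simp⟩

lemma near_rel {t Q l q P : ℕ} {u v : Core t Q ⊕ Leaf t Q l} (h : rel q P u v) :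
    near (gr t Q l q P) 1 u v := by
  by_cases huv : u = v
  · subst huv; exact near_refl _ _ _
  · have : (gr t Q l q P).Adj u v := by
      rw [gr, SimpleGraph.fromRel_adj]; exact ⟨huv, Or.inl h⟩
    exact ⟨this.toWalk, by simp⟩

lemma core_walk {t Q l q P : ℕ} (hq : 0 < q) (hP : 0 < P) (hN : t * Q * t = q * P) (m : ℕ) :
    ∀ (x y : Core t Q) (r : ℕ), r < q ^ m → num y = (q ^ m * num x + r) % (q * P) →
      near (gr t Q l q P) m (Sum.inl x) (Sum.inl y) := by
  induction m with
  | zero =>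
    intro x y r hr h
    have hr0 : r = 0 := by simpa using hr
    subst hr0
    have hx := num_lt x
    rw [hN] at hx
    have : y = x := num_inj (by rw [h]; simpa using Nat.mod_eq_of_lt hx)
    subst this
    exact near_refl _ _ _
  | succ m ih =>
    intro x y r hr h
    have hpos : 0 < q * P := Nat.mul_pos hq hP
    obtain ⟨z, hz⟩ := num_surj (t := t) (Q := Q) ((q ^ m * num x + r / q) % (q * P))
      (by rw [hN]; exact Nat.mod_lt _ hpos)
    have hr1 : r / q < q ^ m := by
      rw [Nat.div_lt_iff_lt_mul hq, ← pow_succ]; exact hr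
    refine near.trans (ih x z (r / q) hr1 hz) (near_rel ?_)
    change num y / q = num z % P
    rw [h, hz, Nat.mod_mul_right_div_self, Nat.mod_mul_left_mod]
    congr 1
    rw [pow_succ, mul_comm (q ^ m) q, mul_assoc, Nat.mul_add_div hq]

lemma exists_shift (A M y : ℕ) (hy : y < M) : ∃ r < M, (A + r) % M = y := by
  have hM : 0 < M := by omega
  refine ⟨(y + (M - A % M)) % M, Nat.mod_lt _ hM, ?_⟩
  have h := Nat.mod_lt A hM
  rw [Nat.add_mod, Nat.mod_mod, ← Nat.add_mod]
  have : A + (y + (M - A % M)) = y + M * (A / M + 1) := by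
    have := Nat.div_add_mod A M
    rw [Nat.mul_add]
    omega
  rw [this, Nat.add_mul_mod_self_left, Nat.mod_eq_of_lt hy]

section dist
variable {t Q l q P T : ℕ}

lemma core_core (hq : 0 < q) (hP : 0 < P) (hN : t * Q * t = q * P) (hQ : Q = q ^ (T + 1))
    (htq : t ≤ q) (x y : Core t Q) :
    near (gr t Q l q P) (T + 3) (Sum.inl x) (Sum.inl y) := by
  have hy := num_lt y
  obtain ⟨r, hr, h⟩ := exists_shift (q ^ (T + 3) * num x) _ _ hy
  refine core_walk hq hP hN _ x y r (lt_of_lt_of_le hr ?_) (by rw [← hN]; exact h.symm)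
  calc t * Q * t ≤ q * Q * q := by gcongr
    _ = q ^ (T + 3) := by rw [hQ]; ring

lemma exists_class (hN : t * Q * t = q * P) (v : Leaf t Q l) (B : ℕ)
    (hpos : 0 < q * P) (h : B % (Q * t) = v.1.val * t + v.2.1.val) :
    ∃ y : Core t Q, num y = B % (q * P) ∧ inc y v := by
  obtain ⟨y, hy⟩ := num_surj (t := t) (Q := Q) (B % (q * P)) (by rw [hN]; exact Nat.mod_lt _ hpos)
  refine ⟨y, hy, ?_⟩
  have h1 := num_mod y
  rw [hy, ← hN, mul_assoc, Nat.mod_mul_left_mod, h] at h1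
  obtain ⟨h2, h3⟩ := pair_inj v.2.1.2 y.2.2.2 h1
  exact ⟨Fin.ext h2.symm, Or.inr (Fin.ext h3.symm)⟩

lemma leaf_class_lt (v : Leaf t Q l) : v.1.val * t + v.2.1.val < Q * t := by
  have := Nat.mul_le_mul_right t (Nat.succ_le_of_lt v.1.2)
  have := v.2.1.2
  rw [Nat.succ_mul] at *
  omega

lemma core_leaf (hq : 0 < q) (hP : 0 < P) (hN : t * Q * t = q * P) (hQ : Q = q ^ (T + 1))
    (htq : t ≤ q) (x : Core t Q) (v : Leaf t Q l) :
    near (gr t Q l q P) (T + 3) (Sum.inl x) (Sum.inr v) := by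
  obtain ⟨r, hr, h⟩ := exists_shift (q ^ (T + 2) * num x) _ _ (leaf_class_lt v)
  obtain ⟨y, hy, hi⟩ := exists_class hN v _ (Nat.mul_pos hq hP) h
  have h3 : near (gr t Q l q P) 1 (Sum.inl y) (Sum.inr v) := near_rel hi
  refine near.trans (m := T + 2) (n := 1) (core_walk hq hP hN (T + 2) x y r (lt_of_lt_of_le hr ?_) hy) h3
  calc Q * t ≤ Q * q := by gcongr
    _ = q ^ (T + 2) := by rw [hQ]; ring

lemma leaf_leaf (hq : 0 < q) (hP : 0 < P) (hN : t * Q * t = q * P) (hQ : Q = q ^ (T + 1))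
    (u v : Leaf t Q l) :
    near (gr t Q l q P) (T + 3) (Sum.inr u) (Sum.inr v) := by
  obtain ⟨r, hr, h⟩ := exists_shift (Q * ((u.2.1.val * Q + u.1.val) * t)) _ _ (leaf_class_lt v)
  obtain ⟨y, hy, hi⟩ := exists_class hN v _ (Nat.mul_pos hq hP) h
  have hQ0 : 0 < Q := by rw [hQ]; positivity
  have hj : r / Q < t := by rw [Nat.div_lt_iff_lt_mul hQ0, mul_comm]; exact hr
  let x : Core t Q := (u.2.1, u.1, ⟨r / Q, hj⟩)
  have hx : inc x u := ⟨rfl, Or.inl rfl⟩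
  have h1 : near (gr t Q l q P) (T + 1) (Sum.inl x) (Sum.inl y) := by
    refine core_walk hq hP hN (T + 1) x y (r % Q) ?_ ?_
    · rw [← hQ]; exact Nat.mod_lt _ hQ0
    · rw [hy, ← hQ]
      congr 1
      have := Nat.div_add_mod r Q
      simp only [num, x]
      rw [Nat.mul_add, add_assoc, this]
  have h2 : near (gr t Q l q P) 1 (Sum.inl x) (Sum.inr u) := near_rel hx
  have h3 : near (gr t Q l q P) 1 (Sum.inl y) (Sum.inr v) := near_rel hi
  have := (h2.symm.trans h1).trans h3
  rwa [show 1 + (T + 1) + 1 = T + 3 by ring] at this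

lemma all_near (hq : 0 < q) (hP : 0 < P) (hN : t * Q * t = q * P) (hQ : Q = q ^ (T + 1))
    (htq : t ≤ q) (u v : Core t Q ⊕ Leaf t Q l) : near (gr t Q l q P) (T + 3) u v := by
  rcases u with x | u <;> rcases v with y | v
  · exact core_core hq hP hN hQ htq x y
  · exact core_leaf hq hP hN hQ htq x v
  · exact (core_leaf hq hP hN hQ htq y u).symm
  · exact leaf_leaf hq hP hN hQ u v

end dist

section deg
variable {t Q l q P : ℕ}

lemma out_card (hq : 0 < q) (x : Core t Q) : {y : Core t Q | arc q P x y}.ncard ≤ q := by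
  have : {y : Core t Q | arc q P x y}.ncard ≤ (Set.Iio q).ncard := by
    refine Set.ncard_le_ncard_of_injOn (fun y => num y % q) (fun y _ => Nat.mod_lt _ hq) ?_
      (Set.finite_Iio q)
    intro y hy z hz h
    apply num_inj
    simp only [arc, Set.mem_ofPred_eq] at hy hz h
    rw [← Nat.div_add_mod (num y) q, ← Nat.div_add_mod (num z) q, hy, hz, h]
  rwa [← Finset.coe_Iio, Set.ncard_coe_finset, Nat.card_Iio] at this

lemma in_card (hP : 0 < P) (hN : t * Q * t = q * P) (x : Core t Q) :
    {y : Core t Q | arc q P y x}.ncard ≤ q := by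
  have : {y : Core t Q | arc q P y x}.ncard ≤ (Set.Iio q).ncard := by
    refine Set.ncard_le_ncard_of_injOn (fun y => num y / P) (fun y _ => ?_) ?_
      (Set.finite_Iio q)
    · rw [Set.mem_Iio, Nat.div_lt_iff_lt_mul hP, ← hN]; exact num_lt y
    intro y hy z hz h
    apply num_inj
    simp only [arc, Set.mem_ofPred_eq] at hy hz h
    rw [← Nat.div_add_mod (num y) P, ← Nat.div_add_mod (num z) P, ← hy, ← hz, h]
  rwa [← Finset.coe_Iio, Set.ncard_coe_finset, Nat.card_Iio] at this

lemma inc_card (D : ℕ) (hD : 2 * l ≤ D ∨ (t = 1 ∧ l ≤ D)) (x : Core t Q) :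
    {v : Leaf t Q l | inc x v}.ncard ≤ D := by
  have hsub : {v : Leaf t Q l | inc x v} ⊆
      (fun p : Fin t × Fin l => (x.2.1, p.1, p.2)) ''
        (((({x.1, x.2.2} : Finset (Fin t)) ×ˢ (Finset.univ : Finset (Fin l))) : Finset _) : Set _) := by
    rintro ⟨a, b, i⟩ ⟨h1, h2⟩
    refine ⟨(b, i), ?_, ?_⟩
    · simp only [Finset.coe_product, Set.mem_prod, Finset.mem_coe, Finset.mem_insert,
        Finset.mem_singleton, Finset.mem_univ, and_true]
      rcases h2 with h2 | h2
      · exact Or.inl h2.symm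
      · exact Or.inr h2.symm
    · simp only at h1; simp [h1]
  have h1 := Set.ncard_le_ncard hsub (Set.toFinite _)
  have h2 := h1.trans (Set.ncard_image_le (Set.toFinite _))
  rw [Set.ncard_coe_finset, Finset.card_product, Finset.card_univ, Fintype.card_fin] at h2
  refine h2.trans ?_
  rcases hD with hD | ⟨ht, hD⟩
  · exact (Nat.mul_le_mul_right l Finset.card_le_two).trans hD
  · have : ({x.1, x.2.2} : Finset (Fin t)).card ≤ 1 := by
      refine (Finset.card_le_univ _).trans ?_
      simp [ht]
    calc _ ≤ 1 * l := Nat.mul_le_mul_right l this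
      _ ≤ D := by omega

lemma leaf_card (v : Leaf t Q l) : {x : Core t Q | inc x v}.ncard ≤ 2 * t := by
  have hsub : {x : Core t Q | inc x v} ⊆
      Set.range (fun p : Fin t ⊕ Fin t =>
        (Sum.elim (fun j => (v.2.1, v.1, j)) (fun j => (j, v.1, v.2.1)) p : Core t Q)) := by
    rintro ⟨c, a, b⟩ ⟨h1, h2⟩
    simp only at h1 h2
    rcases h2 with h2 | h2
    · exact ⟨Sum.inl b, by simp [h1, h2]⟩
    · exact ⟨Sum.inr c, by simp [h1, h2]⟩
  refine (Set.ncard_le_ncard hsub (Set.toFinite _)).trans ?_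
  rw [← Set.image_univ]
  refine (Set.ncard_image_le (Set.toFinite _)).trans ?_
  rw [Set.ncard_univ, Nat.card_eq_fintype_card]
  simp; omega

lemma deg_le (hq : 0 < q) (hP : 0 < P) (hN : t * Q * t = q * P) (D Δ : ℕ)
    (hD : 2 * l ≤ D ∨ (t = 1 ∧ l ≤ D)) (hDΔ : 2 * q + D ≤ Δ) (htq : t ≤ q)
    (u : Core t Q ⊕ Leaf t Q l) : ((gr t Q l q P).neighborSet u).ncard ≤ Δ := by
  rcases u with x | v
  · have hsub : (gr t Q l q P).neighborSet (Sum.inl x) ⊆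
        (Sum.inl '' {y : Core t Q | arc q P x y} ∪ Sum.inl '' {y : Core t Q | arc q P y x}) ∪
          Sum.inr '' {v : Leaf t Q l | inc x v} := by
      intro w hw
      rw [SimpleGraph.mem_neighborSet, gr, SimpleGraph.fromRel_adj] at hw
      rcases w with y | v
      · rcases hw.2 with h | h
        · exact Or.inl (Or.inl ⟨y, h, rfl⟩)
        · exact Or.inl (Or.inr ⟨y, h, rfl⟩)
      · rcases hw.2 with h | h
        · exact Or.inr ⟨v, h, rfl⟩
        · exact h.elim
    have h0 := Set.ncard_le_ncard hsub (Set.toFinite _)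
    have h1 := Set.ncard_union_le (Sum.inl '' {y : Core t Q | arc q P x y} ∪
      Sum.inl '' {y : Core t Q | arc q P y x}) (Sum.inr '' {v : Leaf t Q l | inc x v})
    have h2 := Set.ncard_union_le (Sum.inl '' {y : Core t Q | arc q P x y} :
      Set (Core t Q ⊕ Leaf t Q l)) (Sum.inl '' {y : Core t Q | arc q P y x})
    have h3 := Set.ncard_image_of_injective {y : Core t Q | arc q P x y}
      (Sum.inl_injective (β := Leaf t Q l))
    have h4 := Set.ncard_image_of_injective {y : Core t Q | arc q P y x}
      (Sum.inl_injective (β := Leaf t Q l))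
    have h5 := Set.ncard_image_of_injective {v : Leaf t Q l | inc x v}
      (Sum.inr_injective (α := Core t Q))
    have h6 := out_card (P := P) hq x
    have h7 := in_card hP hN x
    have h8 := inc_card D hD x
    omega
  · have hsub : (gr t Q l q P).neighborSet (Sum.inr v) ⊆
        Sum.inl '' {x : Core t Q | inc x v} := by
      intro w hw
      rw [SimpleGraph.mem_neighborSet, gr, SimpleGraph.fromRel_adj] at hw
      rcases w with y | w
      · rcases hw.2 with h | h
        · exact h.elim
        · exact ⟨y, h, rfl⟩
      · rcases hw.2 with h | h <;> exact h.elim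
    have h0 := Set.ncard_le_ncard hsub (Set.toFinite _)
    have h1 := Set.ncard_image_of_injective {x : Core t Q | inc x v}
      (Sum.inl_injective (β := Leaf t Q l))
    have h2 := leaf_card v
    omega

end deg

lemma edge_le {s Q l q P : ℕ} (hq : 0 < q) (hP : 0 < P)
    (hN : (s + 1) * Q * (s + 1) = q * P) :
    (gr (s + 1) Q l q P).edgeSet.ncard ≤
      (s + 1) * Q * (s + 1) * q + Q * (s + 1) * l * (2 * s + 1) := by
  classical
  have hψ : ∀ n : ℕ, ∃ x : Core (s + 1) Q, n < (s + 1) * Q * (s + 1) → num x = n := by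
    intro n
    by_cases h : n < (s + 1) * Q * (s + 1)
    · obtain ⟨x, hx⟩ := num_surj n h
      exact ⟨x, fun _ => hx⟩
    · have : 0 < (s + 1) * Q * (s + 1) := by rw [hN]; exact Nat.mul_pos hq hP
      obtain ⟨x, hx⟩ := num_surj 0 this
      exact ⟨x, fun h' => absurd h' h⟩
  choose ψ hψ using hψ
  let f : (Core (s + 1) Q × Fin q) ⊕ (Leaf (s + 1) Q l × (Fin (s + 1) ⊕ Fin s)) →
      Sym2 (Core (s + 1) Q ⊕ Leaf (s + 1) Q l) :=
    Sum.elim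
      (fun p => s(Sum.inl p.1, Sum.inl (ψ (q * (num p.1 % P) + p.2.val))))
      (fun p => s(Sum.inl (Sum.elim (fun j => (p.1.2.1, p.1.1, j))
        (fun j => (Fin.succAbove p.1.2.1 j, p.1.1, p.1.2.1)) p.2), Sum.inr p.1))
  have key : ∀ u v : Core (s + 1) Q ⊕ Leaf (s + 1) Q l, rel q P u v → s(u, v) ∈ Set.range f := by
    intro u v h
    rcases u with x | u <;> rcases v with y | v
    · have h' : num y / q = num x % P := h
      refine ⟨Sum.inl (x, ⟨num y % q, Nat.mod_lt _ hq⟩), ?_⟩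
      have : ψ (q * (num x % P) + num y % q) = y := by
        apply num_inj
        rw [← h', Nat.div_add_mod]
        exact hψ _ (num_lt y)
      simp only [f, Sum.elim_inl, this]
    · obtain ⟨h1, h2⟩ : inc x v := h
      obtain ⟨c, a, b⟩ := x
      obtain ⟨a', b', i⟩ := v
      simp only at h1 h2
      subst h1
      by_cases hc : c = b'
      · subst hc
        exact ⟨Sum.inr ((a, c, i), Sum.inl b), by simp [f]⟩
      · have hb : b = b' := h2.resolve_left hc
        subst hb
        obtain ⟨j, hj⟩ := Fin.exists_succAbove_eq hc
        exact ⟨Sum.inr ((a, b, i), Sum.inr j), by simp [f, hj]⟩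
    · exact h.elim
    · exact h.elim
  have hsub : (gr (s + 1) Q l q P).edgeSet ⊆ Set.range f := by
    intro e he
    induction e using Sym2.ind with
    | _ u v =>
      rw [SimpleGraph.mem_edgeSet, gr, SimpleGraph.fromRel_adj] at he
      rcases he.2 with h | h
      · exact key u v h
      · rw [Sym2.eq_swap]; exact key v u h
  refine (Set.ncard_le_ncard hsub (Set.toFinite _)).trans ?_
  rw [← Set.image_univ]
  refine (Set.ncard_image_le (Set.toFinite _)).trans ?_
  rw [Set.ncard_univ, Nat.card_eq_fintype_card]
  simp only [Fintype.card_sum, Fintype.card_prod, Fintype.card_fin]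
  apply le_of_eq
  ring

lemma transfer {V : Type} [Fintype V] [Nonempty V] (G : SimpleGraph V) (k Δ : ℕ)
    (hdeg : ∀ v, (G.neighborSet v).ncard ≤ Δ) (hnear : ∀ u v, near G k u v) :
    ∃ G' : SimpleGraph (Fin (Fintype.card V)), G'.edgeSet.ncard = G.edgeSet.ncard ∧
      (∀ v, (G'.neighborSet v).ncard ≤ Δ) ∧ G'.Connected ∧ (∀ u v, G'.dist u v ≤ k) := by
  let e : G ≃g G.overFin rfl := G.overFinIso rfl
  have hn : ∀ u v, near (G.overFin rfl) k u v := by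
    intro u v
    obtain ⟨p, hp⟩ := hnear (e.symm u) (e.symm v)
    have hw : near (G.overFin rfl) k (e (e.symm u)) (e (e.symm v)) :=
      ⟨p.map e.toHom, by rw [SimpleGraph.Walk.length_map]; exact hp⟩
    simpa using hw
  refine ⟨G.overFin rfl, ?_, ?_, ?_, ?_⟩
  · exact (Nat.card_congr e.mapEdgeSet).symm
  · intro v
    have h := hdeg (e.symm v)
    have h2 : ((G.overFin rfl).neighborSet v).ncard = (G.neighborSet (e.symm v)).ncard :=
      Nat.card_congr (e.symm.mapNeighborSet v)
    omega
  · have : Nonempty (Fin (Fintype.card V)) := ⟨e (Classical.arbitrary V)⟩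
    exact ⟨fun u v => (hn u v).choose.reachable⟩
  · intro u v
    obtain ⟨p, hp⟩ := hn u v
    exact (SimpleGraph.dist_le p).trans hp

lemma build (s T q l D Δ d : ℕ) (hsq : s + 1 ≤ q)
    (hD : 2 * l ≤ D ∨ (s + 1 = 1 ∧ l ≤ D)) (hDΔ : 2 * q + D ≤ Δ)
    (he : 2 * (s + 1) * q + 2 * l * (2 * s + 1) ≤ d * l)
    (hn : d * q ≤ 8 * ((s + 1) * l)) :
    ∃ (n : ℕ) (G : SimpleGraph (Fin n)),
      (2 * G.edgeSet.ncard : ℚ) ≤ d * n ∧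
      (∀ v, (G.neighborSet v).ncard ≤ Δ) ∧
      G.Connected ∧
      (∀ u v, G.dist u v ≤ T + 3) ∧
      ((d : ℚ) / 8) * (q : ℚ) ^ (T + 2) ≤ n := by
  have hq : 0 < q := by omega
  obtain ⟨Q, hQ⟩ : ∃ Q, Q = q ^ (T + 1) := ⟨_, rfl⟩
  obtain ⟨P, hP'⟩ : ∃ P, P = (s + 1) * q ^ T * (s + 1) := ⟨_, rfl⟩
  have hP : 0 < P := by rw [hP']; positivity
  have hQ0 : 0 < Q := by rw [hQ]; positivity
  have hN : (s + 1) * Q * (s + 1) = q * P := by rw [hQ, hP']; ring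
  have : Nonempty (Core (s + 1) Q ⊕ Leaf (s + 1) Q l) :=
    ⟨Sum.inl (0, ⟨0, hQ0⟩, 0)⟩
  obtain ⟨G, h1, h2, h3, h4⟩ := transfer (gr (s + 1) Q l q P) (T + 3) Δ
    (deg_le hq hP hN D Δ hD hDΔ hsq) (all_near hq hP hN hQ hsq)
  have hcard : Fintype.card (Core (s + 1) Q ⊕ Leaf (s + 1) Q l) =
      (s + 1) * Q * (s + 1) + Q * (s + 1) * l := by
    simp only [Fintype.card_sum, Fintype.card_prod, Fintype.card_fin]
    ring
  refine ⟨_, G, ?_, h2, h3, h4, ?_⟩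
  · have h5 := edge_le (l := l) hq hP hN
    rw [← h1] at h5
    have h6 : 2 * G.edgeSet.ncard ≤ d * Fintype.card (Core (s + 1) Q ⊕ Leaf (s + 1) Q l) := by
      have h7 := Nat.mul_le_mul_left (Q * (s + 1)) he
      calc 2 * G.edgeSet.ncard
          ≤ 2 * ((s + 1) * Q * (s + 1) * q + Q * (s + 1) * l * (2 * s + 1)) := by omega
        _ = Q * (s + 1) * (2 * (s + 1) * q + 2 * l * (2 * s + 1)) := by ring
        _ ≤ Q * (s + 1) * (d * l) := h7
        _ = d * (Q * (s + 1) * l) := by ring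
        _ ≤ _ := Nat.mul_le_mul_left d (by rw [hcard]; exact Nat.le_add_left _ _)
    exact_mod_cast h6
  · have h8 : d * q ^ (T + 2) ≤ 8 * Fintype.card (Core (s + 1) Q ⊕ Leaf (s + 1) Q l) := by
      rw [hcard]
      calc d * q ^ (T + 2) = Q * (d * q) := by rw [hQ]; ring
        _ ≤ Q * (8 * ((s + 1) * l)) := Nat.mul_le_mul_left Q hn
        _ = 8 * (Q * (s + 1) * l) := by ring
        _ ≤ _ := Nat.mul_le_mul_left 8 (Nat.le_add_left _ _)
    have h9 : ((d * q ^ (T + 2) : ℕ) : ℚ) ≤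
      ((8 * Fintype.card (Core (s + 1) Q ⊕ Leaf (s + 1) Q l) : ℕ) : ℚ) := by exact_mod_cast h8
    rw [Nat.cast_mul, Nat.cast_mul, Nat.cast_pow] at h9
    have h10 : ((8 : ℕ) : ℚ) = 8 := by norm_num
    rw [h10] at h9
    linarith

end AvgDeg


/-- For all integers `d ≥ 4`, `k ≥ 3`, and `Δ ≥ 2d`, there exists a graph with
average degree at most `d`, maximum degree at most `Δ`, diameter at most `k`,
and at least `(d/8)·⌊Δ/4⌋^{k−1}` vertices. -/
theorem average_degree_lower_bound (d k Δ : ℕ) (hd : 4 ≤ d) (hk : 3 ≤ k) (hΔ : 2 * d ≤ Δ) :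
    ∃ (n : ℕ) (G : SimpleGraph (Fin n)),
      (2 * G.edgeSet.ncard : ℚ) ≤ d * n ∧
      (∀ v, (G.neighborSet v).ncard ≤ Δ) ∧
      G.Connected ∧
      (∀ u v, G.dist u v ≤ k) ∧
      ((d : ℚ) / 8) * ((Δ / 4 : ℕ) : ℚ) ^ (k - 1) ≤ n := by
  obtain ⟨T, rfl⟩ : ∃ T, k = T + 3 := ⟨k - 3, by omega⟩
  have hk1 : T + 3 - 1 = T + 2 := rfl
  rw [hk1]
  have hq : d / 2 ≤ Δ / 4 := by omega
  have hq4 : 4 * (Δ / 4) ≤ Δ := Nat.mul_div_le Δ 4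
  generalize Δ / 4 = q at hq hq4
  by_cases h : d < 10
  · refine AvgDeg.build 0 T q (2 * q) (2 * q) Δ d (by omega) (Or.inr ⟨rfl, le_rfl⟩) (by omega)
      ?_ ?_
    · nlinarith
    · nlinarith
  · obtain ⟨s, hs⟩ : ∃ s, s = (d - 4) / 6 := ⟨_, rfl⟩
    have hs1 : 6 * s + 4 ≤ d := by omega
    have hs2 : d ≤ 8 * (s + 1) := by omega
    refine AvgDeg.build s T q q (2 * q) Δ d (by omega) (Or.inl le_rfl) (by omega) ?_ ?_
    · have := Nat.mul_le_mul_right q hs1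
      calc _ = (6 * s + 4) * q := by ring
        _ ≤ _ := this
    · have := Nat.mul_le_mul_right q hs2
      calc _ ≤ _ := this
        _ = _ := by ring
end

section
/- For all even integers k ≥ 2, t ≥ 2, and Δ ≥ 4√(2t), there exists a graph with maximum degree Δ, diameter k, treewidth at most t, and at least (1/2)√(t+1)·(Δ−1)^{k/2} vertices. -/
/-- A graph is chordal if every cycle of length at least 4 has a chord, i.e.
an edge of the graph joining two vertices of the cycle that is not an edge of
the cycle. (Equivalently, every induced cycle is a triangle.) -/
def IsChordal {V : Type*} (H : SimpleGraph V) : Prop :=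
  ∀ (v : V) (c : H.Walk v v), c.IsCycle → 4 ≤ c.length →
    ∃ x y, x ∈ c.support ∧ y ∈ c.support ∧ H.Adj x y ∧ s(x, y) ∉ c.edges

/-- `G` has treewidth at most `t`: `G` is a spanning subgraph of a chordal graph
with no clique on `t + 2` vertices. -/
def TreewidthLE {V : Type*} (G : SimpleGraph V) (t : ℕ) : Prop :=
  ∃ H : SimpleGraph V, G ≤ H ∧ IsChordal H ∧ H.CliqueFree (t + 2)

namespace TW

/-- There is a walk of length at most `k`. -/
def Near {V : Type*} (G : SimpleGraph V) (k : ℕ) (u v : V) : Prop :=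
  ∃ w : G.Walk u v, w.length ≤ k

lemma Near.symm {V : Type*} {G : SimpleGraph V} {k : ℕ} {u v : V} (h : Near G k u v) :
    Near G k v u := by
  obtain ⟨w, hw⟩ := h
  exact ⟨w.reverse, by simpa using hw⟩

lemma Near.mono {V : Type*} {G : SimpleGraph V} {k l : ℕ} {u v : V} (h : Near G k u v)
    (hkl : k ≤ l) : Near G l u v := by
  obtain ⟨w, hw⟩ := h
  exact ⟨w, hw.trans hkl⟩

lemma Near.trans {V : Type*} {G : SimpleGraph V} {k l : ℕ} {u v x : V} (h : Near G k u v)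
    (h' : Near G l v x) : Near G (k + l) u x := by
  obtain ⟨w, hw⟩ := h
  obtain ⟨w', hw'⟩ := h'
  exact ⟨w.append w', by rw [SimpleGraph.Walk.length_append]; omega⟩

lemma Near.refl {V : Type*} {G : SimpleGraph V} (k : ℕ) (u : V) : Near G k u u :=
  ⟨.nil, by simp⟩

lemma Near.adj {V : Type*} {G : SimpleGraph V} {u v : V} (h : G.Adj u v) : Near G 1 u v :=
  ⟨h.toWalk, by simp⟩

lemma Near.map {V W : Type*} {G : SimpleGraph V} {G' : SimpleGraph W} (f : G →g G') {k : ℕ}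
    {u v : V} (h : Near G k u v) : Near G' k (f u) (f v) := by
  obtain ⟨w, hw⟩ := h
  exact ⟨w.map f, by simpa using hw⟩

/-- A ranking witnessing a perfect elimination ordering of width at most `t`. -/
def IsElim {V : Type*} (H : SimpleGraph V) (r : V → ℕ) (t : ℕ) : Prop :=
  (∀ u v, H.Adj u v → r u ≠ r v) ∧
  (∀ v x y, H.Adj v x → H.Adj v y → r x < r v → r y < r v → x ≠ y → H.Adj x y) ∧
  (∀ v, {x | H.Adj v x ∧ r x < r v}.ncard ≤ t)

lemma IsElim.chordal {V : Type*} {H : SimpleGraph V} {r : V → ℕ} {t : ℕ}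
    (h : IsElim H r t) : IsChordal H := by
  classical
  intro v c hc hlen
  obtain ⟨m, hm, hmax⟩ := Finset.exists_max_image c.support.toFinset r ⟨v, by simp⟩
  rw [List.mem_toFinset] at hm
  have hmax' : ∀ x ∈ c.support, r x ≤ r m := fun x hx => hmax x (by simpa using hx)
  set c' := c.rotate m hm with hc'def
  have hc' : c'.IsCycle := hc.rotate hm
  have hsup : ∀ x, x ∈ c'.support ↔ x ∈ c.support := fun x => by
    simp [hc'def]
  have hed : ∀ e, e ∈ c'.edges ↔ e ∈ c.edges := fun e => by
    exact (c.rotate_edges m hm).perm.mem_iff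
  have hl : c'.length = c.length := by
    simp [hc'def]
  set n := c'.length with hn
  have h0 : c'.getVert 0 = m := by simp
  have hnn : c'.getVert n = m := by simp [hn]
  have a1 : H.Adj m (c'.getVert 1) := by
    have := c'.adj_getVert_succ (i := 0) (by omega)
    simpa using this
  have a2 : H.Adj m (c'.getVert (n-1)) := by
    have := c'.adj_getVert_succ (i := n-1) (by omega)
    rw [show n - 1 + 1 = n by omega, hnn] at this
    exact this.symm
  have hinj := hc'.getVert_injOn
  have hI : ∀ i j, 1 ≤ i → i ≤ n → 1 ≤ j → j ≤ n → c'.getVert i = c'.getVert j → i = j :=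
    fun i j hi hi' hj hj' e => hinj ⟨hi, hi'⟩ ⟨hj, hj'⟩ e
  have hne : c'.getVert 1 ≠ c'.getVert (n-1) := fun e => by
    have := hI 1 (n-1) le_rfl (by omega) (by omega) (by omega) e
    omega
  have s1 : c'.getVert 1 ∈ c.support := (hsup _).1 (c'.getVert_mem_support 1)
  have s2 : c'.getVert (n-1) ∈ c.support := (hsup _).1 (c'.getVert_mem_support (n-1))
  refine ⟨_, _, s1, s2, h.2.1 m _ _ a1 a2 ?_ ?_ hne, ?_⟩
  · exact lt_of_le_of_ne (hmax' _ s1) (h.1 _ _ a1).symm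
  · exact lt_of_le_of_ne (hmax' _ s2) (h.1 _ _ a2).symm
  · rw [← hed]
    intro hmem
    rw [← SimpleGraph.Walk.adj_toSubgraph_iff_mem_edges, SimpleGraph.Walk.toSubgraph_adj_iff] at hmem
    obtain ⟨i, hi0, hii⟩ := hmem
    have hi := hi0.symm
    rw [← hn] at hii
    have hz : ∀ j, 1 ≤ j → j ≤ n → c'.getVert 0 = c'.getVert j → j = n := by
      intro j hj hj' e
      refine hI j n hj hj' (by omega) le_rfl ?_
      rw [hnn, ← e, h0]
    rcases Nat.eq_zero_or_pos i with rfl | hip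
    · rcases Sym2.eq_iff.1 hi with ⟨e1, e2⟩ | ⟨e1, e2⟩
      · have := hz 1 le_rfl (by omega) e1.symm
        omega
      · have := hz (n-1) (by omega) (by omega) e2.symm
        omega
    · rcases Sym2.eq_iff.1 hi with ⟨e1, e2⟩ | ⟨e1, e2⟩
      · have := hI _ _ le_rfl (by omega) hip (by omega) e1
        have := hI _ _ (by omega) (by omega) (by omega) (by omega) e2
        omega
      · have := hI _ _ le_rfl (by omega) (by omega) (by omega) e1
        omega

lemma IsElim.cliqueFree {V : Type*} [Finite V] {H : SimpleGraph V} {r : V → ℕ} {t : ℕ}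
    (h : IsElim H r t) : H.CliqueFree (t + 2) := by
  classical
  intro s hs
  have hcard := hs.card_eq
  obtain ⟨m, hm, hmax⟩ := Finset.exists_max_image s r (Finset.card_pos.1 (by omega))
  have h1 : ((s.erase m : Finset V) : Set V) ⊆ {x | H.Adj m x ∧ r x < r m} := by
    intro x hx
    have hx' := Finset.mem_erase.1 (Finset.mem_coe.1 hx)
    have ha : H.Adj m x := hs.isClique hm hx'.2 (Ne.symm hx'.1)
    exact ⟨ha, lt_of_le_of_ne (hmax x hx'.2) (h.1 _ _ ha).symm⟩
  have h2 := Set.ncard_le_ncard h1 (Set.toFinite _)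
  rw [Set.ncard_coe_finset, Finset.card_erase_of_mem hm, hcard] at h2
  have := h.2.2 m
  omega

lemma IsElim.comap {V W : Type*} [Finite W] {H : SimpleGraph W} {r : W → ℕ} {t : ℕ}
    (h : IsElim H r t) (e : V ≃ W) : IsElim (H.comap e) (r ∘ e) t := by
  refine ⟨fun u v a => h.1 _ _ a,
    fun v x y a b c d ne => h.2.1 _ _ _ a b c d (fun q => ne (e.injective q)), fun v => ?_⟩
  refine le_trans ?_ (h.2.2 (e v))
  refine Set.ncard_le_ncard_of_injOn e ?_ e.injective.injOn (Set.toFinite _)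
  intro x hx
  exact hx

lemma finish {V : Type} [Fintype V] [Nonempty V] (G H : SimpleGraph V) (r : V → ℕ)
    (t Δ k : ℕ) (hdeg : ∀ v, (G.neighborSet v).ncard ≤ Δ) (hnear : ∀ u v, Near G k u v)
    (hGH : G ≤ H) (hE : IsElim H r t) :
    ∃ G' : SimpleGraph (Fin (Fintype.card V)),
      (∀ v, (G'.neighborSet v).ncard ≤ Δ) ∧
      G'.Connected ∧
      (∀ u v, G'.dist u v ≤ k) ∧
      TreewidthLE G' t := by
  let e : Fin (Fintype.card V) ≃ V := (Fintype.equivFin V).symm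
  have iso : G ≃g G.comap e :=
    { toEquiv := e.symm, map_rel_iff' := by intro a b; simp }
  have hn : ∀ u v, Near (G.comap e) k u v := by
    intro u v
    have := Near.map iso.toHom (hnear (iso.symm u) (iso.symm v))
    simpa using this
  haveI : Nonempty (Fin (Fintype.card V)) := ⟨e.symm (Classical.arbitrary V)⟩
  refine ⟨G.comap e, ?_, ?_, ?_, H.comap e, ?_, (hE.comap e).chordal, (hE.comap e).cliqueFree⟩
  · intro v
    refine le_trans ?_ (hdeg (e v))
    exact Set.ncard_le_ncard_of_injOn e (fun x hx => hx) e.injective.injOn (Set.toFinite _)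
  · exact ⟨fun u v => (hn u v).elim fun w _ => ⟨w⟩⟩
  · intro u v
    obtain ⟨w, hw⟩ := hn u v
    exact (SimpleGraph.dist_le w).trans hw
  · intro a b hab
    exact hGH hab

/-- Attach `q` pendant vertices to each vertex of `L`. -/
def ext {V : Type} (G : SimpleGraph V) (L : Set V) (q : ℕ) : SimpleGraph (V ⊕ (L × Fin q)) where
  Adj a b := match a, b with
    | .inl u, .inl v => G.Adj u v
    | .inl u, .inr l => u = l.1
    | .inr l, .inl u => u = l.1
    | .inr _, .inr _ => False
  symm := ⟨by
    rintro (a | a) (b | b) h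
    · exact SimpleGraph.Adj.symm (G := G) h
    · exact h
    · exact h
    · exact h⟩
  loopless := ⟨by
    rintro (a | a) h
    · exact G.loopless.irrefl _ h
    · exact h⟩

def Weak (Δ t k d N : ℕ) : Prop :=
  ∃ (V : Type) (_ : Fintype V) (_ : Nonempty V) (G H : SimpleGraph V) (r : V → ℕ) (L : Set V),
    (∀ v, (G.neighborSet v).ncard ≤ Δ) ∧ (∀ v ∈ L, (G.neighborSet v).ncard ≤ d) ∧
    (∀ u v, Near G (k + 2) u v) ∧ (∀ u ∈ L, ∀ v, Near G (k + 1) u v) ∧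
    (∀ u ∈ L, ∀ v ∈ L, Near G k u v) ∧ G ≤ H ∧ IsElim H r t ∧ N ≤ L.ncard

def Strong (Δ t k d N : ℕ) : Prop :=
  ∃ (V : Type) (_ : Fintype V) (_ : Nonempty V) (G H : SimpleGraph V) (r : V → ℕ) (L : Set V),
    (∀ v, (G.neighborSet v).ncard ≤ Δ) ∧ (∀ v ∈ L, (G.neighborSet v).ncard ≤ d) ∧
    (∀ u v, Near G k u v) ∧ G ≤ H ∧ IsElim H r t ∧ N ≤ L.ncard

lemma Strong.weak {Δ t k d N : ℕ} (h : Strong Δ t k d N) : Weak Δ t k d N := by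
  obtain ⟨V, i, i', G, H, r, L, h1, h2, h3, h4, h5, h6⟩ := h
  exact ⟨V, i, i', G, H, r, L, h1, h2, fun u v => (h3 u v).mono (by omega),
    fun u _ v => (h3 u v).mono (by omega), fun u _ v _ => h3 u v, h4, h5, h6⟩

lemma ext_elim {V : Type} [Fintype V] {H : SimpleGraph V} {r : V → ℕ} {t : ℕ}
    (h : IsElim H r t) (ht : 1 ≤ t) (L : Set V) (q : ℕ) :
    ∃ r', IsElim (ext H L q) r' t := by
  classical
  let M := Finset.univ.sup r + 1
  have hM : ∀ v, r v < M := fun v => Nat.lt_succ_of_le (Finset.le_sup (Finset.mem_univ v))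
  refine ⟨Sum.elim r (fun _ => M), ?_, ?_, ?_⟩
  · rintro (u | u) (v | v) a
    · exact h.1 _ _ a
    · exact (hM u).ne
    · exact (hM v).ne'
    · exact a.elim
  · rintro (v | v) (x | x) (y | y) a b c d ne
    · exact h.2.1 v x y a b c d (fun q => ne (congrArg _ q))
    · exact absurd d (hM v).not_gt
    · exact absurd c (hM v).not_gt
    · exact absurd c (hM v).not_gt
    · exact absurd (congrArg _ ((show x = _ from a).trans (show y = _ from b).symm)) ne
    · exact b.elim
    · exact a.elim
    · exact a.elim
  · rintro (v | v)
    · refine le_trans ?_ (h.2.2 v)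
      have : {x | (ext H L q).Adj (.inl v) x ∧
          Sum.elim r (fun _ => M) x < Sum.elim r (fun _ : L × Fin q => M) (.inl v)} ⊆
          Sum.inl '' {x | H.Adj v x ∧ r x < r v} := by
        rintro (x | x) ⟨hx, hx'⟩
        · exact ⟨x, ⟨hx, hx'⟩, rfl⟩
        · exact absurd hx' (hM v).not_gt
      refine (Set.ncard_le_ncard this (Set.toFinite _)).trans ?_
      exact Set.ncard_image_le (Set.toFinite _)
    · have : {x | (ext H L q).Adj (.inr v) x ∧
          Sum.elim r (fun _ => M) x < Sum.elim r (fun _ : L × Fin q => M) (.inr v)} ⊆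
          {Sum.inl v.1.1} := by
        rintro (x | x) ⟨hx, hx'⟩
        · exact congrArg _ hx
        · exact hx.elim
      refine (Set.ncard_le_ncard this (Set.toFinite _)).trans ?_
      simpa using ht

lemma Weak.extend {Δ t k d N q : ℕ} (h : Weak Δ t k d N) (hq : d + q ≤ Δ) (hΔ : 1 ≤ Δ)
    (ht : 1 ≤ t) : Strong Δ t (k + 2) 1 (N * q) := by
  classical
  obtain ⟨V, i, i', G, H, r, L, h1, h2, h3, h4, h5, h6, h7, h8⟩ := h
  obtain ⟨r', hr'⟩ := ext_elim h7 ht L q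
  let f : G →g ext G L q := ⟨Sum.inl, fun h => h⟩
  have hinr : ∀ l : L × Fin q, ((ext G L q).neighborSet (.inr l)).ncard ≤ 1 := by
    intro l
    have : (ext G L q).neighborSet (.inr l) ⊆ {Sum.inl l.1.1} := by
      rintro (x | x) hx
      · exact congrArg _ (show x = _ from hx)
      · exact (show False from hx).elim
    refine (Set.ncard_le_ncard this (Set.toFinite _)).trans ?_
    simp
  have hadj : ∀ l : L × Fin q, Near (ext G L q) 1 (.inr l) (.inl l.1.1) :=
    fun l => Near.adj (show (l.1.1 : V) = _ from rfl)
  have hmap : ∀ {k u v}, Near G k u v → Near (ext G L q) k (.inl u) (.inl v) :=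
    fun h => Near.map f h
  refine ⟨V ⊕ (L × Fin q), inferInstance, inferInstance, ext G L q, ext H L q, r',
    Set.range Sum.inr, ?_, ?_, ?_, ?_, hr', ?_⟩
  · rintro (v | l)
    · by_cases hv : v ∈ L
      · have : (ext G L q).neighborSet (.inl v) ⊆
            (Sum.inl '' G.neighborSet v) ∪ Set.range (fun j : Fin q => Sum.inr (⟨v, hv⟩, j)) := by
          rintro (x | x) hx
          · exact Or.inl ⟨x, hx, rfl⟩
          · refine Or.inr ⟨x.2, ?_⟩
            have : v = x.1 := hx
            subst this
            rfl
        refine (Set.ncard_le_ncard this (Set.toFinite _)).trans ?_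
        refine (Set.ncard_union_le _ _).trans ?_
        have e1 := Set.ncard_image_le (f := (Sum.inl : V → V ⊕ (L × Fin q)))
          (Set.toFinite (G.neighborSet v))
        have e2 : (Set.range (fun j : Fin q =>
            (Sum.inr (⟨v, hv⟩, j) : V ⊕ (L × Fin q)))).ncard ≤ q := by
          rw [← Set.image_univ]
          refine (Set.ncard_image_le (Set.toFinite _)).trans ?_
          simp [Set.ncard_univ]
        have := h2 v hv
        omega
      · have : (ext G L q).neighborSet (.inl v) ⊆ (Sum.inl '' G.neighborSet v) := by
          rintro (x | x) hx
          · exact ⟨x, hx, rfl⟩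
          · exact absurd ((show v = x.1 from hx) ▸ x.1.2) hv
        refine (Set.ncard_le_ncard this (Set.toFinite _)).trans ?_
        exact (Set.ncard_image_le (Set.toFinite _)).trans (h1 v)
    · exact (hinr l).trans hΔ
  · rintro _ ⟨l, rfl⟩
    exact hinr l
  · rintro (u | u) (v | v)
    · exact hmap (h3 u v)
    · exact ((hadj v).trans (hmap (h4 _ v.1.2 u))).symm.mono (by omega)
    · exact ((hadj u).trans (hmap (h4 _ u.1.2 v))).mono (by omega)
    · exact (((hadj u).trans (hmap (h5 _ u.1.2 _ v.1.2))).trans (hadj v).symm).mono (by omega)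
  · rintro (u | u) (v | v) huv
    · exact h6 huv
    · exact huv
    · exact huv
    · exact huv
  · rw [← Set.image_univ, Set.ncard_image_of_injective _ Sum.inr_injective, Set.ncard_univ,
      Nat.card_prod, Nat.card_coe_set_eq, Nat.card_fin]
    exact Nat.mul_le_mul_right _ h8

/-- Edges of the complete graph on `Fin p`. -/
abbrev Pt (p : ℕ) := {e : Sym2 (Fin p) // ¬ e.IsDiag}

/-- Points, and `m` copies of each line; points adjacent according to `R`. -/
def base (p m : ℕ) (R : SimpleGraph (Pt p)) : SimpleGraph (Pt p ⊕ (Fin p × Fin m)) where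
  Adj a b := match a, b with
    | .inl u, .inl v => R.Adj u v
    | .inl u, .inr l => l.1 ∈ u.1
    | .inr l, .inl u => l.1 ∈ u.1
    | .inr _, .inr _ => False
  symm := ⟨by
    rintro (a | a) (b | b) h
    · exact SimpleGraph.Adj.symm (G := R) h
    · exact h
    · exact h
    · exact h⟩
  loopless := ⟨by
    rintro (a | a) h
    · exact R.loopless.irrefl _ h
    · exact h⟩

/-- Line graph of the complete graph. -/
def lineG (p : ℕ) : SimpleGraph (Pt p) where
  Adj e f := e ≠ f ∧ ∃ a, a ∈ e.1 ∧ a ∈ f.1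
  symm := ⟨fun _ _ h => ⟨h.1.symm, h.2.imp fun _ h => ⟨h.2, h.1⟩⟩⟩
  loopless := ⟨fun _ h => h.1 rfl⟩

lemma exists_pt {p : ℕ} (hp : 2 ≤ p) (a b : Fin p) : ∃ e : Pt p, a ∈ e.1 ∧ b ∈ e.1 := by
  by_cases h : a = b
  · haveI : Nontrivial (Fin p) := Fin.nontrivial_iff_two_le.2 hp
    obtain ⟨c, hc⟩ := exists_ne a
    exact ⟨⟨s(a, c), by simpa using hc.symm⟩, by simp, by simp [← h]⟩
  · exact ⟨⟨s(a, b), by simpa using h⟩, by simp, by simp⟩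

lemma card_pt (p : ℕ) : Fintype.card (Pt p) = p.choose 2 := by
  rw [Sym2.card_subtype_not_diag, Fintype.card_fin]

/-- number of points on a line, other than a given set -/
lemma line_ncard {p : ℕ} (a : Fin p) (S : Finset (Fin p)) (ha : a ∈ S) :
    {e : Pt p | ∃ c, c ∉ S ∧ e.1 = s(a, c)}.ncard ≤ p - S.card := by
  classical
  have h1 : (Subtype.val '' {e : Pt p | ∃ c, c ∉ S ∧ e.1 = s(a, c)}) ⊆
      (fun c => s(a, c)) '' ((Sᶜ : Finset (Fin p)) : Set (Fin p)) := by
    rintro _ ⟨e, ⟨c, hc, hec⟩, rfl⟩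
    exact ⟨c, by simpa using hc, hec.symm⟩
  have h2 := Set.ncard_le_ncard h1 (Set.toFinite _)
  rw [Set.ncard_image_of_injective _ Subtype.val_injective] at h2
  refine h2.trans ((Set.ncard_image_le (Set.toFinite _)).trans ?_)
  rw [Set.ncard_coe_finset, Finset.card_compl, Fintype.card_fin]

lemma mem_line {p : ℕ} (a : Fin p) (e : Pt p) (h : a ∈ e.1) : ∃ c, c ≠ a ∧ e.1 = s(a, c) := by
  obtain ⟨c, hc⟩ := Sym2.mem_iff_exists.1 h
  refine ⟨c, ?_, hc⟩
  rintro rfl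
  exact e.2 (by rw [hc]; simp)

lemma base_deg_inr {p m : ℕ} (R : SimpleGraph (Pt p)) (l : Fin p × Fin m) :
    ((base p m R).neighborSet (.inr l)).ncard ≤ p - 1 := by
  have : (base p m R).neighborSet (.inr l) ⊆
      Sum.inl '' {e : Pt p | ∃ c, c ∉ ({l.1} : Finset (Fin p)) ∧ e.1 = s(l.1, c)} := by
    rintro (x | x) hx
    · obtain ⟨c, h1, h2⟩ := mem_line l.1 x hx
      exact ⟨x, ⟨c, by simpa using h1, h2⟩, rfl⟩
    · exact (show False from hx).elim
  refine (Set.ncard_le_ncard this (Set.toFinite _)).trans ?_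
  refine (Set.ncard_image_le (Set.toFinite _)).trans ?_
  simpa using line_ncard l.1 {l.1} (by simp)

lemma base_deg_inl {p m : ℕ} (R : SimpleGraph (Pt p)) (e : Pt p) :
    ((base p m R).neighborSet (.inl e)).ncard ≤ (R.neighborSet e).ncard + 2 * m := by
  obtain ⟨e, he⟩ := e
  induction e using Sym2.ind with
  | _ a b =>
  have : (base p m R).neighborSet (.inl ⟨s(a, b), he⟩) ⊆
      (Sum.inl '' R.neighborSet ⟨s(a, b), he⟩) ∪
      (Set.range (fun i : Fin m => Sum.inr (a, i)) ∪
        Set.range (fun i : Fin m => Sum.inr (b, i))) := by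
    rintro (x | x) hx
    · exact Or.inl ⟨x, hx, rfl⟩
    · rcases Sym2.mem_iff.1 (show x.1 ∈ s(a, b) from hx) with h | h
      · exact Or.inr (Or.inl ⟨x.2, by rw [← h]⟩)
      · exact Or.inr (Or.inr ⟨x.2, by rw [← h]⟩)
  refine (Set.ncard_le_ncard this (Set.toFinite _)).trans ?_
  refine (Set.ncard_union_le _ _).trans ?_
  refine Nat.add_le_add (Set.ncard_image_le (Set.toFinite _)) ?_
  refine (Set.ncard_union_le _ _).trans ?_
  have hr : ∀ a : Fin p, (Set.range (fun i : Fin m =>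
      (Sum.inr (a, i) : Pt p ⊕ (Fin p × Fin m)))).ncard ≤ m := by
    intro a
    rw [← Set.image_univ]
    refine (Set.ncard_image_le (Set.toFinite _)).trans ?_
    simp [Set.ncard_univ]
  have := hr a
  have := hr b
  omega

lemma lineG_deg {p : ℕ} (e : Pt p) : ((lineG p).neighborSet e).ncard ≤ 2 * (p - 2) := by
  classical
  obtain ⟨e, he⟩ := e
  induction e using Sym2.ind with
  | _ a b =>
  have hab : a ≠ b := by simpa using he
  have : (lineG p).neighborSet ⟨s(a, b), he⟩ ⊆
      {e : Pt p | ∃ c, c ∉ ({a, b} : Finset (Fin p)) ∧ e.1 = s(a, c)} ∪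
      {e : Pt p | ∃ c, c ∉ ({a, b} : Finset (Fin p)) ∧ e.1 = s(b, c)} := by
    rintro f ⟨hne, x, hx, hxf⟩
    obtain ⟨c, hc, hfc⟩ := mem_line x f hxf
    rcases Sym2.mem_iff.1 hx with rfl | rfl
    · refine Or.inl ⟨c, ?_, hfc⟩
      simp only [Finset.mem_insert, Finset.mem_singleton, not_or]
      refine ⟨hc, ?_⟩
      rintro rfl
      exact hne (Subtype.ext hfc.symm)
    · refine Or.inr ⟨c, ?_, hfc⟩
      simp only [Finset.mem_insert, Finset.mem_singleton, not_or]
      refine ⟨?_, hc⟩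
      rintro rfl
      exact hne (Subtype.ext (by rw [hfc]; exact Sym2.eq_swap))
  refine (Set.ncard_le_ncard this (Set.toFinite _)).trans ?_
  refine (Set.ncard_union_le _ _).trans ?_
  have h1 := line_ncard a {a, b} (by simp)
  have h2 := line_ncard b {a, b} (by simp)
  rw [Finset.card_pair hab] at h1 h2
  omega

lemma base_elim (p m t : ℕ) (hp : p - 1 ≤ t) (hX : p.choose 2 ≤ t + 1) :
    ∃ r, IsElim (base p m ⊤) r t := by
  classical
  let n := Fintype.card (Pt p)
  let φ : Pt p ≃ Fin n := Fintype.equivFin (Pt p)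
  refine ⟨Sum.elim (fun e => (φ e : ℕ)) (fun _ => n), ?_, ?_, ?_⟩
  · rintro (u | u) (v | v) a
    · intro h
      exact (show u ≠ v from a) (φ.injective (Fin.ext h))
    · exact (φ u).2.ne
    · exact (φ v).2.ne'
    · exact a.elim
  · rintro (v | v) (x | x) (y | y) a b c d ne
    · exact fun q => ne (congrArg _ q)
    · exact absurd d (φ v).2.not_gt
    · exact absurd c (φ v).2.not_gt
    · exact absurd c (φ v).2.not_gt
    · exact fun q => ne (congrArg _ q)
    · exact b.elim
    · exact a.elim
    · exact a.elim
  · rintro (v | v)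
    · have : {x | (base p m ⊤).Adj (.inl v) x ∧ Sum.elim (fun e => (φ e : ℕ)) (fun _ => n) x <
          Sum.elim (fun e => (φ e : ℕ)) (fun _ : Fin p × Fin m => n) (.inl v)} ⊆
          Sum.inl '' ((Finset.univ.erase v : Finset (Pt p)) : Set (Pt p)) := by
        rintro (x | x) ⟨hx, hx'⟩
        · exact ⟨x, by simpa using (show v ≠ x from hx).symm, rfl⟩
        · exact absurd hx' (φ v).2.not_gt
      refine (Set.ncard_le_ncard this (Set.toFinite _)).trans ?_
      refine (Set.ncard_image_le (Set.toFinite _)).trans ?_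
      rw [Set.ncard_coe_finset, Finset.card_erase_of_mem (Finset.mem_univ _), Finset.card_univ,
        card_pt]
      omega
    · refine le_trans ?_ ((base_deg_inr (⊤ : SimpleGraph (Pt p)) v).trans hp)
      exact Set.ncard_le_ncard (fun x hx => hx.1) (Set.toFinite _)

lemma base_le (p m : ℕ) (R : SimpleGraph (Pt p)) : base p m R ≤ base p m ⊤ := by
  rintro (u | u) (v | v) huv
  · exact R.ne_of_adj huv
  · exact huv
  · exact huv
  · exact huv

lemma base_near_rr {p m : ℕ} (hp : 2 ≤ p) (R : SimpleGraph (Pt p)) (u v : Fin p × Fin m) :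
    Near (base p m R) 2 (.inr u) (.inr v) := by
  obtain ⟨e, h1, h2⟩ := exists_pt hp u.1 v.1
  have n1 : Near (base p m R) 1 (.inr u) (.inl e) := Near.adj h1
  have n2 : Near (base p m R) 1 (.inl e) (.inr v) := Near.adj h2
  exact n1.trans n2

lemma exists_mem_pt {p : ℕ} (e : Pt p) : ∃ a, a ∈ e.1 := by
  obtain ⟨e, he⟩ := e
  induction e using Sym2.ind with
  | _ a b => exact ⟨a, by simp⟩

lemma base_weak {p m t Δ : ℕ} (hp : 2 ≤ p) (hpt : p - 1 ≤ t) (hX : p.choose 2 ≤ t + 1)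
    (hm : 1 ≤ m) (hmΔ : 2 * m ≤ Δ) (hpΔ : p ≤ Δ) : Weak Δ t 2 (p - 1) (p * m) := by
  classical
  obtain ⟨r, hr⟩ := base_elim p m t hpt hX
  let j : Fin m := ⟨0, hm⟩
  have near : ∀ e : Pt p, ∃ l : Fin p × Fin m, Near (base p m ⊥) 1 (.inl e) (.inr l) := by
    intro e
    obtain ⟨a, ha⟩ := exists_mem_pt e
    exact ⟨(a, j), Near.adj ha⟩
  refine ⟨_, inferInstance, ⟨.inr (⟨0, by omega⟩, j)⟩, base p m ⊥, base p m ⊤, r,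
    Set.range Sum.inr, ?_, ?_, ?_, ?_, ?_, base_le _ _ _, hr, ?_⟩
  · rintro (e | l)
    · refine (base_deg_inl _ e).trans ?_
      have : (⊥ : SimpleGraph (Pt p)).neighborSet e = ∅ := by ext; simp
      rw [this, Set.ncard_empty]
      omega
    · exact (base_deg_inr _ l).trans (by omega)
  · rintro _ ⟨l, rfl⟩
    exact base_deg_inr _ l
  · rintro (u | u) (v | v)
    · obtain ⟨a, ha⟩ := near u
      obtain ⟨b, hb⟩ := near v
      exact ((ha.trans (base_near_rr hp _ a b)).trans hb.symm).mono (by omega)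
    · obtain ⟨a, ha⟩ := near u
      exact (ha.trans (base_near_rr hp _ a v)).mono (by omega)
    · obtain ⟨b, hb⟩ := near v
      exact ((base_near_rr hp _ u b).trans hb.symm).mono (by omega)
    · exact (base_near_rr hp _ u v).mono (by omega)
  · rintro _ ⟨u, rfl⟩ (v | v)
    · obtain ⟨b, hb⟩ := near v
      exact ((base_near_rr hp _ u b).trans hb.symm).mono (by omega)
    · exact (base_near_rr hp _ u v).mono (by omega)
  · rintro _ ⟨u, rfl⟩ _ ⟨v, rfl⟩
    exact base_near_rr hp _ u v
  · rw [← Set.image_univ, Set.ncard_image_of_injective _ Sum.inr_injective, Set.ncard_univ,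
      Nat.card_prod, Nat.card_fin, Nat.card_fin]

lemma base_near_line {p m : ℕ} (hp : 2 ≤ p) (u v : Pt p ⊕ (Fin p × Fin m)) :
    Near (base p m (lineG p)) 2 u v := by
  have key : ∀ (e f : Pt p) a, a ∈ e.1 → a ∈ f.1 →
      Near (base p m (lineG p)) 1 (.inl e) (.inl f) := by
    intro e f a he hf
    by_cases h : e = f
    · subst h
      exact Near.refl _ _
    · exact Near.adj (show (lineG p).Adj e f from ⟨h, a, he, hf⟩)
  have key2 : ∀ (e : Pt p) (l : Fin p × Fin m),
      Near (base p m (lineG p)) 2 (.inl e) (.inr l) := by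
    intro e l
    obtain ⟨a, ha⟩ := exists_mem_pt e
    obtain ⟨f, h1, h2⟩ := exists_pt hp a l.1
    have n2 : Near (base p m (lineG p)) 1 (.inl f) (.inr l) := Near.adj h2
    exact (key e f a ha h1).trans n2
  rcases u with e | l <;> rcases v with e' | l'
  · obtain ⟨a, ha⟩ := exists_mem_pt e
    obtain ⟨b, hb⟩ := exists_mem_pt e'
    obtain ⟨f, h1, h2⟩ := exists_pt hp a b
    exact (key e f a ha h1).trans (key f e' b h2 hb)
  · exact key2 e l'
  · exact (key2 e' l).symm
  · exact base_near_rr hp _ l l'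

lemma chain {Δ t k N : ℕ} (hΔ : 1 ≤ Δ) (ht : 1 ≤ t) (h : Strong Δ t k 1 N) (j : ℕ) :
    Strong Δ t (k + 2 * j) 1 (N * (Δ - 1) ^ j) := by
  induction j with
  | zero => simpa using h
  | succ j ih =>
    have := ih.weak.extend (q := Δ - 1) (by omega) hΔ ht
    rw [pow_succ, ← mul_assoc]
    exact this

/-- choice of the number of lines -/
lemma exists_p (t : ℕ) (ht : 2 ≤ t) :
    ∃ p, 3 ≤ p ∧ p * (p - 1) ≤ 2 * (t + 1) ∧ 2 * (t + 1) + 2 ≤ (p + 1) * p := by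
  have hex : ∃ p, 2 * (t + 1) < (p + 1) * p := ⟨2 * (t + 1), by nlinarith⟩
  classical
  let p := Nat.find hex
  have h1 : 2 * (t + 1) < (p + 1) * p := Nat.find_spec hex
  have h3 : 3 ≤ p := by
    by_contra hlt
    have : p ≤ 2 := by omega
    interval_cases p <;> omega
  refine ⟨p, h3, ?_, ?_⟩
  · have := Nat.find_min hex (show p - 1 < p by omega)
    rw [Nat.sub_add_cancel (by omega)] at this
    omega
  · have : Even ((p + 1) * p) := by rw [mul_comm]; exact Nat.even_mul_succ_self p
    obtain ⟨c, hc⟩ := this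
    omega

lemma numeric (s p D : ℝ) (hp : 3 ≤ p) (h1 : p * (p - 1) ≤ 2 * s) (h2 : 2 * s + 2 ≤ (p + 1) * p)
    (hD : 4 * √(2 * (s - 1)) ≤ D) : √s * (D - 1) ≤ p * (D - p + 1) := by
  have hs : 3 ≤ s := by nlinarith
  rcases le_total (2 * s) (p ^ 2) with h | h
  · have hD' : 4 * (p - 1) ≤ D := by
      refine le_trans ?_ hD
      have : p - 1 ≤ √(2 * (s - 1)) := Real.le_sqrt_of_sq_le (by nlinarith)
      linarith
    have hr : √s ≤ 0.7072 * p := by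
      rw [Real.sqrt_le_left (by positivity)]
      nlinarith
    nlinarith [mul_le_mul_of_nonneg_right hr (show 0 ≤ D - 1 by linarith),
      mul_le_mul_of_nonneg_left hD' (show 0 ≤ p by linarith)]
  · have hD' : 4 * (p - 1/2) ≤ D := by
      refine le_trans ?_ hD
      have : p - 1/2 ≤ √(2 * (s - 1)) := Real.le_sqrt_of_sq_le (by nlinarith)
      linarith
    have hr : √s ≤ 0.7072 * (p + 1/2) := by
      rw [Real.sqrt_le_left (by positivity)]
      nlinarith
    nlinarith [mul_le_mul_of_nonneg_right hr (show 0 ≤ D - 1 by linarith),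
      mul_le_mul_of_nonneg_left hD' (show 0 ≤ 0.2928 * p - 0.3536 by linarith)]

lemma numeric_two (s p D : ℝ) (hp : 3 ≤ p) (h1 : p * (p - 1) ≤ 2 * s)
    (hD : 4 * √(2 * (s - 1)) ≤ D) : 2 * p ≤ D := by
  refine le_trans ?_ hD
  have : p / 2 ≤ √(2 * (s - 1)) := Real.le_sqrt_of_sq_le (by nlinarith)
  linarith

end TW

/-- For all even integers `k ≥ 2`, `t ≥ 2`, and `Δ ≥ 4√(2t)`, there exists a
graph with maximum degree at most `Δ`, diameter at most `k`, treewidth at most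
`t`, and at least `(1/2)√(t+1)·(Δ−1)^{k/2}` vertices. -/
theorem treewidth_lower_bound_even (k t Δ : ℕ) (hk : 2 ≤ k) (heven : Even k)
    (ht : 2 ≤ t) (hΔ : 4 * Real.sqrt (2 * t) ≤ Δ) :
    ∃ (n : ℕ) (G : SimpleGraph (Fin n)),
      (∀ v, (G.neighborSet v).ncard ≤ Δ) ∧
      G.Connected ∧
      (∀ u v, G.dist u v ≤ k) ∧
      TreewidthLE G t ∧
      Real.sqrt (t + 1) * ((Δ : ℝ) - 1) ^ (k / 2) / 2 ≤ n := by
  obtain ⟨p, hp, hp1, hp2⟩ := TW.exists_p t ht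
  have hpR : (3 : ℝ) ≤ p := by exact_mod_cast hp
  have hp1R : (p : ℝ) * (p - 1) ≤ 2 * ((t : ℝ) + 1) := by
    have : ((p * (p - 1) : ℕ) : ℝ) ≤ ((2 * (t + 1) : ℕ) : ℝ) := by exact_mod_cast hp1
    rw [Nat.cast_mul, Nat.cast_sub (by omega)] at this
    push_cast at this
    exact this
  have hp2R : 2 * ((t : ℝ) + 1) + 2 ≤ (p + 1) * p := by exact_mod_cast hp2
  have hΔ' : 4 * √(2 * (((t : ℝ) + 1) - 1)) ≤ (Δ : ℝ) := by simpa using hΔ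
  have key := TW.numeric _ _ _ hpR hp1R hp2R hΔ'
  have h2p : 2 * p ≤ Δ := by exact_mod_cast TW.numeric_two _ _ _ hpR hp1R hΔ'
  have hch : p.choose 2 ≤ t + 1 := by
    rw [Nat.choose_two_right]
    omega
  have hpt : p - 1 ≤ t := by
    have : p * 2 ≤ p * (p - 1) := Nat.mul_le_mul_left _ (by omega)
    omega
  obtain ⟨h, hh⟩ := heven
  have hk2 : k / 2 = h := by omega
  rw [hk2]
  rcases Nat.lt_or_ge h 2 with hlt | hge
  · have h1 : h = 1 := by omega
    subst h1
    subst hh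
    obtain ⟨m, hm1, hm2⟩ : ∃ m, 2 * m + 2 * (p - 2) ≤ Δ ∧ Δ ≤ 2 * m + 2 * (p - 2) + 1 :=
      ⟨(Δ - 2 * (p - 2)) / 2, by omega, by omega⟩
    obtain ⟨r, hr⟩ := TW.base_elim p m t hpt hch
    haveI : Nonempty (TW.Pt p ⊕ (Fin p × Fin m)) :=
      ⟨.inl (TW.exists_pt (by omega) ⟨0, by omega⟩ ⟨0, by omega⟩).choose⟩
    obtain ⟨G, g1, g2, g3, g4⟩ := TW.finish (TW.base p m (TW.lineG p)) _ r t Δ 2 (by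
      rintro (e | l)
      · have := TW.base_deg_inl (m := m) (TW.lineG p) e
        have := TW.lineG_deg e
        omega
      · have := TW.base_deg_inr (TW.lineG p) l
        omega) (TW.base_near_line (by omega)) (TW.base_le _ _ _) hr
    refine ⟨_, G, g1, g2, g3, g4, ?_⟩
    rw [Fintype.card_sum, TW.card_pt, Fintype.card_prod, Fintype.card_fin, Fintype.card_fin]
    push_cast
    rw [Nat.cast_choose_two, pow_one]
    have hmR : (Δ : ℝ) ≤ 2 * m + 2 * (p - 2) + 1 := by
      have : (Δ : ℝ) ≤ ((2 * m + 2 * (p - 2) + 1 : ℕ) : ℝ) := by exact_mod_cast hm2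
      push_cast [Nat.cast_sub (show 2 ≤ p by omega)] at this
      exact this
    nlinarith
  · obtain ⟨j, rfl⟩ := Nat.exists_eq_add_of_le hge
    have w := TW.base_weak (p := p) (m := Δ / 2) (t := t) (Δ := Δ) (by omega) hpt hch
      (by omega) (by omega) (by omega)
    have st := TW.chain (by omega) (by omega)
      (w.extend (q := Δ - (p - 1)) (by omega) (by omega) (by omega)) j
    obtain ⟨V, i, i', G, H, r, L, h1, h2, h3, h4, h5, h6⟩ := st
    obtain ⟨G', g1, g2, g3, g4⟩ := TW.finish G H r t Δ _ h1 h3 h4 h5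
    refine ⟨_, G', g1, g2, fun u v => (g3 u v).trans (by omega), g4, ?_⟩
    have hL : L.ncard ≤ Fintype.card V := by
      rw [← Nat.card_eq_fintype_card]
      exact Set.ncard_le_card L
    have hN := h6.trans hL
    have hNR : ((p * (Δ / 2) * (Δ - (p - 1)) * (Δ - 1) ^ j : ℕ) : ℝ) ≤ Fintype.card V := by
      exact_mod_cast hN
    refine le_trans ?_ hNR
    rw [Nat.cast_mul, Nat.cast_mul, Nat.cast_mul, Nat.cast_pow, Nat.cast_sub (show 1 ≤ Δ by omega),
      Nat.cast_sub (show p - 1 ≤ Δ by omega), Nat.cast_sub (show 1 ≤ p by omega), Nat.cast_one]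
    have hm : ((Δ : ℝ) - 1) ≤ 2 * ((Δ / 2 : ℕ) : ℝ) := by
      have : Δ ≤ 2 * (Δ / 2) + 1 := by omega
      have : (Δ : ℝ) ≤ 2 * ((Δ / 2 : ℕ) : ℝ) + 1 := by exact_mod_cast this
      linarith
    have hD1 : (0 : ℝ) ≤ (Δ : ℝ) - 1 := by
      have : (1 : ℝ) ≤ Δ := by exact_mod_cast (show 1 ≤ Δ by omega)
      linarith
    have hDp : (0 : ℝ) ≤ (p : ℝ) * (Δ - p + 1) := by
      have : (p : ℝ) ≤ Δ := by exact_mod_cast (show p ≤ Δ by omega)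
      exact mul_nonneg (by linarith) (by linarith)
    calc √((t : ℝ) + 1) * ((Δ : ℝ) - 1) ^ (2 + j) / 2
        = (√((t : ℝ) + 1) * ((Δ : ℝ) - 1)) * ((Δ : ℝ) - 1) * ((Δ : ℝ) - 1) ^ j / 2 := by ring
      _ ≤ ((p : ℝ) * (Δ - p + 1)) * (2 * ((Δ / 2 : ℕ) : ℝ)) * ((Δ : ℝ) - 1) ^ j / 2 := by
        gcongr
      _ = _ := by ring
end
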